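/- arXiv:0709.2466 — 4 statements merged into one kernel-verified Lean document; each statement's English description precedes it below -/
import Mathlib

section
/- Let A be an n×n quaternion matrix with A² = 0. Then A is unitarily similar to a direct sum of matrices, each of which is one of: the 2×2 matrix [[0, b],[0, 0]] with b a positive real number, or the 1×1 matrix [0]; moreover this direct sum is uniquely determined by A up to permutation of the summands. -/
open Matrix
open scoped Quaternion

noncomputable section

/-- A quaternion matrix `U` is unitary if `Uᴴ * U = 1`. -/
def IsUnitaryM {m : Type*} [Fintype m] [DecidableEq m] (U : Matrix m m ℍ[ℝ]) : Prop :=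
  Uᴴ * U = 1

/-- `A` and `B` are unitarily similar if `A = Uᴴ * B * U` for some unitary `U`. -/
def UnitarilySimilar {m : Type*} [Fintype m] [DecidableEq m] (A B : Matrix m m ℍ[ℝ]) : Prop :=
  ∃ U : Matrix m m ℍ[ℝ], IsUnitaryM U ∧ A = Uᴴ * B * U

/-- The direct sum of `p` blocks `[[0, b t],[0, 0]]` and `r` blocks `[0]`. -/
def nilCanon (p r : ℕ) (b : Fin p → ℝ) :
    Matrix ((Fin 2 × Fin p) ⊕ Fin r) ((Fin 2 × Fin p) ⊕ Fin r) ℍ[ℝ] :=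
  Matrix.fromBlocks (Matrix.blockDiagonal fun t => !![0, (b t : ℍ[ℝ]); 0, 0]) 0 0 0

/-- A family of vectors of `ℍ^m` is orthonormal for the form `x* y`. -/
def QOrthonormal {ι m : Type*} [Fintype m] [DecidableEq ι] (f : ι → m → ℍ[ℝ]) : Prop :=
  ∀ i j, star (f i) ⬝ᵥ f j = if i = j then 1 else 0

section Orthonormal

theorem star_smul_quaternion_vec {m : Type*} (c : ℝ) (x : m → ℍ[ℝ]) : star (c • x) = c • star x :=
  funext fun i => Quaternion.star_smul c (x i)

variable {ι m : Type*} [Fintype m]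

theorem star_dotProduct_self_eq_sum (x : m → ℍ[ℝ]) :
    star x ⬝ᵥ x = ((∑ i, Quaternion.normSq (x i) : ℝ) : ℍ[ℝ]) := by
  have h : ((∑ i, Quaternion.normSq (x i) : ℝ) : ℍ[ℝ])
      = ∑ i, ((Quaternion.normSq (x i) : ℝ) : ℍ[ℝ]) :=
    map_sum (algebraMap ℝ ℍ[ℝ]) _ _
  rw [h]
  simp [dotProduct, Quaternion.star_mul_self]

theorem star_dotProduct_self_eq_zero {x : m → ℍ[ℝ]} : star x ⬝ᵥ x = 0 ↔ x = 0 := by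
  refine ⟨fun h => ?_, fun h => by simp [h]⟩
  rw [star_dotProduct_self_eq_sum] at h
  have h' : ∑ i, Quaternion.normSq (x i) = 0 := congrArg QuaternionAlgebra.re h
  rw [Finset.sum_eq_zero_iff_of_nonneg fun _ _ => Quaternion.normSq_nonneg] at h'
  ext1 i
  exact Quaternion.normSq_eq_zero.1 (h' i (Finset.mem_univ i))

theorem star_mulVec_dotProduct {l : Type*} [Fintype l] (A : Matrix l m ℍ[ℝ])
    (x : m → ℍ[ℝ]) (y : l → ℍ[ℝ]) :
    star (A *ᵥ x) ⬝ᵥ y = star x ⬝ᵥ (Aᴴ *ᵥ y) := by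
  rw [star_mulVec, dotProduct_mulVec]

theorem QOrthonormal.conjTranspose_mul [DecidableEq ι] {f : ι → m → ℍ[ℝ]} (hf : QOrthonormal f) :
    ((Matrix.of f)ᵀ)ᴴ * (Matrix.of f)ᵀ = 1 := by
  ext1 i j
  rw [Matrix.one_apply, ← hf i j]
  rfl

theorem QOrthonormal.card_le [Fintype ι] [DecidableEq ι] {f : ι → m → ℍ[ℝ]} (hf : QOrthonormal f) :
    Fintype.card ι ≤ Fintype.card m := by
  set F := (Matrix.of f)ᵀ with hF
  let G : (ι → ℍ[ℝ]) →ₗ[ℝ] (m → ℍ[ℝ]) :=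
    { toFun := fun x => F *ᵥ x
      map_add' := fun x y => mulVec_add _ _ _
      map_smul' := fun c x => mulVec_smul _ _ _ }
  have hG : Function.Injective G := by
    refine Function.LeftInverse.injective (g := fun y => Fᴴ *ᵥ y) fun x => ?_
    change Fᴴ *ᵥ (F *ᵥ x) = x
    rw [mulVec_mulVec, hF, hf.conjTranspose_mul, one_mulVec]
  have h := LinearMap.finrank_le_finrank_of_injective hG
  simp [Module.finrank_pi_fintype, Quaternion.finrank_eq_four] at h
  exact h

theorem inner_toLp_quaternion (x y : m → ℍ[ℝ]) :
    inner ℝ (WithLp.toLp 2 x) (WithLp.toLp 2 y) = (star x ⬝ᵥ y).re := by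
  have h : (star x ⬝ᵥ y).re = ∑ i, (star (x i) * y i).re :=
    map_sum (QuaternionAlgebra.reₗ _ _ _ : ℍ[ℝ] →ₗ[ℝ] ℝ) _ _
  rw [PiLp.inner_apply, h]
  refine Finset.sum_congr rfl fun i _ => ?_
  rw [Quaternion.inner_def]
  simp

theorem exists_unit_real_multiple {x : m → ℍ[ℝ]} (hx : x ≠ 0) :
    ∃ y : m → ℍ[ℝ], star y ⬝ᵥ y = 1 ∧ ∃ r : ℝ, y = r • x := by
  set s : ℝ := ∑ i, Quaternion.normSq (x i)
  have hxs : star x ⬝ᵥ x = ((s : ℝ) : ℍ[ℝ]) := star_dotProduct_self_eq_sum x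
  have hs0 : 0 ≤ s := Finset.sum_nonneg fun _ _ => Quaternion.normSq_nonneg
  have hs1 : s ≠ 0 := fun h => hx (star_dotProduct_self_eq_zero.1 (by rw [hxs, h]; rfl))
  refine ⟨(√s)⁻¹ • x, ?_, _, rfl⟩
  rw [star_smul_quaternion_vec, smul_dotProduct, dotProduct_smul, hxs, smul_smul,
    ← mul_inv, Real.mul_self_sqrt hs0, ← Quaternion.coe_smul, smul_eq_mul, inv_mul_cancel₀ hs1]
  rfl

/-- Fewer than `|m|` eigenvectors of a Hermitian quaternion matrix are always orthogonal to some
further unit eigenvector. -/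
theorem exists_unit_eigenvector_orthogonal [Fintype ι] [DecidableEq ι] {f : ι → m → ℍ[ℝ]}
    {H : Matrix m m ℍ[ℝ]} (hH : Hᴴ = H) {c : ι → ℝ} (hc : ∀ i, H *ᵥ f i = c i • f i)
    (hcard : Fintype.card ι < Fintype.card m) :
    ∃ (x : m → ℍ[ℝ]) (μ : ℝ), star x ⬝ᵥ x = 1 ∧ (∀ i, star (f i) ⬝ᵥ x = 0) ∧
      H *ᵥ x = μ • x := by
  let E := PiLp 2 fun _ : m => ℍ[ℝ]
  let G : E →ₗ[ℝ] (ι → ℍ[ℝ]) :=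
    { toFun := fun x i => star (f i) ⬝ᵥ x.ofLp
      map_add' := fun x y => funext fun i => dotProduct_add _ _ _
      map_smul' := fun r x => funext fun i => dotProduct_smul _ _ _ }
  let T : E →ₗ[ℝ] E :=
    { toFun := fun x => WithLp.toLp 2 (H *ᵥ x.ofLp)
      map_add' := fun x y => congrArg (WithLp.toLp 2) (mulVec_add _ _ _)
      map_smul' := fun r x => congrArg (WithLp.toLp 2) (mulVec_smul _ _ _) }
  have hE : Module.finrank ℝ E = Fintype.card m * 4 := by
    rw [(WithLp.linearEquiv 2 ℝ (m → ℍ[ℝ])).finrank_eq]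
    simp [Module.finrank_pi_fintype, Quaternion.finrank_eq_four]
  have hG : LinearMap.ker G ≠ ⊥ := by
    refine LinearMap.ker_ne_bot_of_finrank_lt ?_
    rw [hE]
    simp [Module.finrank_pi_fintype, Quaternion.finrank_eq_four, hcard]
  have hT : T.IsSymmetric := by
    intro x y
    change inner ℝ (WithLp.toLp 2 (H *ᵥ x.ofLp)) (WithLp.toLp 2 y.ofLp)
      = inner ℝ (WithLp.toLp 2 x.ofLp) (WithLp.toLp 2 (H *ᵥ y.ofLp))
    rw [inner_toLp_quaternion, inner_toLp_quaternion, star_mulVec_dotProduct, hH]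
  have hW : ∀ x ∈ LinearMap.ker G, T x ∈ LinearMap.ker G := by
    intro x hx
    rw [LinearMap.mem_ker] at hx ⊢
    ext1 i
    change star (f i) ⬝ᵥ (H *ᵥ x.ofLp) = 0
    have hi : star (f i) ⬝ᵥ x.ofLp = 0 := congrFun hx i
    rw [← hH, ← star_mulVec_dotProduct, hc, star_smul_quaternion_vec, smul_dotProduct, hi, smul_zero]
  have : Nontrivial (LinearMap.ker G) := Submodule.nontrivial_iff_ne_bot.2 hG
  obtain ⟨⟨w, hwG⟩, hw⟩ :=
    (hT.restrict_invariant hW).hasEigenvalue_iSup_of_finiteDimensional.exists_hasEigenvector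
  have hw1 := hw.apply_eq_smul
  have hw0 : w ≠ 0 := fun h => hw.2 (Subtype.ext h)
  generalize (RCLike.ofReal _ : ℝ) = μ at hw1
  have hw2 : H *ᵥ w.ofLp = μ • w.ofLp := 
    congrArg (fun z : LinearMap.ker G => (z : E).ofLp) hw1
  have hwG' : ∀ i, star (f i) ⬝ᵥ w.ofLp = 0 := congrFun (LinearMap.mem_ker.1 hwG)
  obtain ⟨x, hx, r, hxr⟩ := exists_unit_real_multiple
    (x := w.ofLp) fun h => hw0 (congrArg (WithLp.toLp 2) h)
  refine ⟨x, μ, hx, fun i => ?_, ?_⟩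
  · rw [hxr, dotProduct_smul, hwG', smul_zero]
  · rw [hxr, mulVec_smul, hw2, smul_comm]

/-- Any orthonormal family of eigenvectors of a Hermitian quaternion matrix can be enlarged by
`r` further vectors as long as the total number does not exceed the dimension. -/
theorem QOrthonormal.exists_extension [Fintype ι] [DecidableEq ι] {f : ι → m → ℍ[ℝ]}
    (hf : QOrthonormal f) {H : Matrix m m ℍ[ℝ]} (hH : Hᴴ = H)
    {c : ι → ℝ} (hc : ∀ i, H *ᵥ f i = c i • f i) (r : ℕ)
    (hcard : Fintype.card ι + r ≤ Fintype.card m) :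
    ∃ (g : Fin r → m → ℍ[ℝ]) (d : Fin r → ℝ), QOrthonormal (Sum.elim f g) ∧
      ∀ i, H *ᵥ g i = d i • g i := by
  induction r with
  | zero =>
    refine ⟨Fin.elim0, Fin.elim0, ?_, fun i => i.elim0⟩
    rintro (i | i) (j | j)
    · simpa using hf i j
    · exact j.elim0
    · exact i.elim0
    · exact i.elim0
  | succ r ih =>
    obtain ⟨g, d, hfg, hg⟩ := ih (by omega)
    obtain ⟨x, μ, hx, hfx, hHx⟩ := exists_unit_eigenvector_orthogonal
      (f := Sum.elim f g) hH (c := Sum.elim c d)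
      (by rintro (i | i) <;> simp [hc, hg]) (by simp; omega)
    have hxf : ∀ i, star x ⬝ᵥ Sum.elim f g i = 0 := fun i => by
      rw [star_dotProduct, hfx, star_zero]
    refine ⟨Fin.cons x g, Fin.cons μ d, ?_, Fin.cases hHx hg⟩
    rintro (i | i) (j | j)
    · simpa using hf i j
    · refine Fin.cases ?_ (fun j => ?_) j
      · simpa using hfx (Sum.inl i)
      · simpa using hfg (Sum.inl i) (Sum.inr j)
    · refine Fin.cases ?_ (fun i => ?_) i
      · simpa using hxf (Sum.inl j)
      · simpa using hfg (Sum.inr i) (Sum.inl j)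
    · refine Fin.cases ?_ (fun i => ?_) i <;> refine Fin.cases ?_ (fun j => ?_) j
      · simpa using hx
      · simpa [(Fin.succ_ne_zero _).symm] using hxf (Sum.inr j)
      · simpa using hfx (Sum.inr i)
      · simpa using hfg (Sum.inr i) (Sum.inr j)

/-- Spectral theorem for Hermitian quaternion matrices. -/
theorem exists_qOrthonormal_eigenvectors {H : Matrix m m ℍ[ℝ]} (hH : Hᴴ = H) :
    ∃ (g : Fin (Fintype.card m) → m → ℍ[ℝ]) (d : Fin (Fintype.card m) → ℝ),
      QOrthonormal g ∧ ∀ i, H *ᵥ g i = d i • g i := by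
  obtain ⟨g, d, hg, hd⟩ := QOrthonormal.exists_extension (ι := Empty) (f := Empty.elim)
    (fun i => i.elim) hH (c := Empty.elim) (fun i => i.elim) (Fintype.card m) (by simp)
  exact ⟨g, d, fun i j => by simpa using hg (Sum.inr i) (Sum.inr j), hd⟩

theorem QOrthonormal.mul_conjTranspose [Fintype ι] [DecidableEq ι] [DecidableEq m]
    {f : ι → m → ℍ[ℝ]} (hf : QOrthonormal f) (hcard : Fintype.card ι = Fintype.card m) :
    (Matrix.of f)ᵀ * ((Matrix.of f)ᵀ)ᴴ = 1 :=
  (mul_eq_one_comm_of_card_eq _ _ _ hcard).1 hf.conjTranspose_mul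

/-- A vector orthogonal to a full orthonormal family vanishes. -/
theorem QOrthonormal.eq_zero_of_orthogonal [Fintype ι] [DecidableEq ι]
    {f : ι → m → ℍ[ℝ]} (hf : QOrthonormal f) (hcard : Fintype.card ι = Fintype.card m)
    {x : m → ℍ[ℝ]} (hx : ∀ i, star (f i) ⬝ᵥ x = 0) : x = 0 := by
  classical
  have h : ((Matrix.of f)ᵀ)ᴴ *ᵥ x = 0 := funext hx
  rw [← one_mulVec x, ← hf.mul_conjTranspose hcard, ← mulVec_mulVec, h, mulVec_zero]

end Orthonormal

section Existence

/-- The singular vectors of a self-annihilating matrix pair up: there is an orthonormal family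
`u t, v t` with `A (v t) = b t • u t` and `A (u t) = 0`, and `A` vanishes on its orthogonal
complement. -/
theorem exists_singular_pairs {m : Type*} [Fintype m] {A : Matrix m m ℍ[ℝ]} (hA : A * A = 0) :
    ∃ (p : ℕ) (b : Fin p → ℝ) (f : Fin 2 × Fin p → m → ℍ[ℝ]), (∀ t, 0 < b t) ∧
      QOrthonormal f ∧ (∀ t, A *ᵥ f (0, t) = 0) ∧ (∀ t, A *ᵥ f (1, t) = b t • f (0, t)) ∧
      ∀ x, (∀ i, star (f i) ⬝ᵥ x = 0) → A *ᵥ x = 0 := by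
  have hH : (Aᴴ * A)ᴴ = Aᴴ * A := by rw [conjTranspose_mul, conjTranspose_conjTranspose]
  have hAA : ∀ x, A *ᵥ (A *ᵥ x) = 0 := fun x => by rw [mulVec_mulVec, hA, zero_mulVec]
  obtain ⟨v, c, hv, hc⟩ := exists_qOrthonormal_eigenvectors hH
  have hc' : ∀ i, Aᴴ *ᵥ (A *ᵥ v i) = c i • v i := fun i => by rw [mulVec_mulVec, hc]
  have hgram : ∀ i j, star (A *ᵥ v i) ⬝ᵥ (A *ᵥ v j) = c j • if i = j then 1 else 0 := by
    intro i j
    rw [star_mulVec_dotProduct, hc', dotProduct_smul, hv]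
  have hcross : ∀ i j, 0 < c j → star (A *ᵥ v i) ⬝ᵥ v j = 0 := by
    intro i j hj
    have h : c j • (star (A *ᵥ v i) ⬝ᵥ v j) = 0 := by
      rw [← dotProduct_smul, ← hc', ← star_mulVec_dotProduct, hAA, star_zero, zero_dotProduct]
    exact (smul_eq_zero.1 h).resolve_left hj.ne'
  have hnonneg : ∀ i, 0 ≤ c i := by
    intro i
    have h := hgram i i
    rw [star_dotProduct_self_eq_sum, if_pos rfl] at h
    have h' : ∑ k, Quaternion.normSq ((A *ᵥ v i) k) = c i := by
      simpa using congrArg QuaternionAlgebra.re h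
    rw [← h']
    exact Finset.sum_nonneg fun _ _ => Quaternion.normSq_nonneg
  let q := (Fintype.equivFin {i // 0 < c i}).symm
  have hq : ∀ t, 0 < c (q t) := fun t => (q t).2
  have hsq : ∀ t, √(c (q t)) * √(c (q t)) = c (q t) := fun t => Real.mul_self_sqrt (hq t).le
  have hpos : ∀ t, 0 < √(c (q t)) := fun t => Real.sqrt_pos.2 (hq t)
  have hinj : ∀ s t, ((q s).1 = (q t).1) = (s = t) := fun s t => by
    rw [Subtype.val_inj, q.injective.eq_iff]
  refine ⟨_, fun t => √(c (q t)),
    fun k => ![(√(c (q k.2)))⁻¹ • A *ᵥ v (q k.2), v (q k.2)] k.1, hpos, ?_, ?_, ?_, ?_⟩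
  · rintro ⟨i, s⟩ ⟨j, t⟩
    fin_cases i <;> fin_cases j
    · simp only [Fin.zero_eta, Matrix.cons_val_zero, star_smul_quaternion_vec, smul_dotProduct,
        dotProduct_smul, hgram, Prod.mk.injEq, true_and, hinj]
      split_ifs with h
      · subst h
        have h1 : (√(c (q s)))⁻¹ * ((√(c (q s)))⁻¹ * c (q s)) = 1 := by
          rw [← mul_assoc, ← mul_inv, hsq, inv_mul_cancel₀ (hq s).ne']
        rw [smul_smul, smul_smul, mul_assoc, h1, one_smul]
      · simp
    · simp [star_smul_quaternion_vec, hcross _ _ (hq t)]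
    · rw [star_dotProduct]
      simp [star_smul_quaternion_vec, hcross _ _ (hq s)]
    · simp [hv _ _, hinj]
  · intro t
    simp [mulVec_smul, hAA]
  · intro t
    simp [smul_smul, (hpos t).ne']
  · intro x hx
    have hx' : ∀ i, 0 < c i → star (v i) ⬝ᵥ x = 0 := fun i hi => by
      simpa using hx (1, q.symm ⟨i, hi⟩)
    have h0 : Aᴴ *ᵥ (A *ᵥ x) = 0 := by
      refine hv.eq_zero_of_orthogonal (by simp) fun i => ?_
      rw [mulVec_mulVec, ← hH, ← star_mulVec_dotProduct, hc, star_smul_quaternion_vec,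
        smul_dotProduct]
      rcases (hnonneg i).eq_or_lt with h | h
      · rw [← h, zero_smul]
      · rw [hx' i h, smul_zero]
    rw [← star_dotProduct_self_eq_zero, star_mulVec_dotProduct, h0, dotProduct_zero]

/-- If `A` acts on an orthonormal basis through the matrix `N`, it is unitarily similar to `N`. -/
theorem QOrthonormal.unitarilySimilar {κ m : Type*} [Fintype κ] [DecidableEq κ] [Fintype m]
    [DecidableEq m] {f : κ → m → ℍ[ℝ]} (hf : QOrthonormal f) (e : κ ≃ m) {A : Matrix m m ℍ[ℝ]}
    {N : Matrix κ κ ℍ[ℝ]} (h : A * (Matrix.of f)ᵀ = (Matrix.of f)ᵀ * N) :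
    UnitarilySimilar A (N.submatrix e.symm e.symm) := by
  have hF := hf.mul_conjTranspose (Fintype.card_congr e)
  refine ⟨(((Matrix.of f)ᵀ)ᴴ).submatrix e.symm id, ?_, ?_⟩
  · rw [IsUnitaryM, conjTranspose_submatrix, submatrix_mul_equiv, conjTranspose_conjTranspose,
      hF, submatrix_id_id]
  · rw [conjTranspose_submatrix, submatrix_mul_equiv, submatrix_mul_equiv,
      conjTranspose_conjTranspose, ← h, Matrix.mul_assoc, hF, Matrix.mul_one, submatrix_id_id]

theorem mul_nilCanon_eq {m : Type*} [Fintype m] {A : Matrix m m ℍ[ℝ]} {p r : ℕ} {b : Fin p → ℝ}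
    {f : Fin 2 × Fin p → m → ℍ[ℝ]} {g : Fin r → m → ℍ[ℝ]} (h0 : ∀ t, A *ᵥ f (0, t) = 0)
    (h1 : ∀ t, A *ᵥ f (1, t) = b t • f (0, t)) (hg : ∀ i, A *ᵥ g i = 0) :
    A * (Matrix.of (Sum.elim f g))ᵀ = (Matrix.of (Sum.elim f g))ᵀ * nilCanon p r b := by
  ext1 i j
  have hl : (A * (Matrix.of (Sum.elim f g))ᵀ) i j = (A *ᵥ Sum.elim f g j) i := rfl
  rw [hl, Matrix.mul_apply]
  rcases j with ⟨a, t⟩ | j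
  · fin_cases a
    · simp [nilCanon, Fintype.sum_sum_type, Fintype.sum_prod_type, blockDiagonal_apply, h0]
    · simp [nilCanon, Fintype.sum_sum_type, Fintype.sum_prod_type, blockDiagonal_apply, h1,
        Quaternion.mul_coe_eq_smul]
  · simp [nilCanon, Fintype.sum_sum_type, hg]

end Existence

section Uniqueness

/-- A doubly stochastic array supported on `d' i = d j` forces `d` and `d'` to have fibres of
the same size. -/
theorem card_fiber_eq_of_doublyStochastic {κ κ' : Type*} [Fintype κ] [Fintype κ']
    {P : κ' → κ → ℝ} {d : κ → ℝ} {d' : κ' → ℝ} (hrow : ∀ i, ∑ j, P i j = 1)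
    (hcol : ∀ j, ∑ i, P i j = 1) (hP : ∀ i j, P i j ≠ 0 → d' i = d j) (β : ℝ) :
    (Finset.univ.filter fun j => d j = β).card = (Finset.univ.filter fun i => d' i = β).card := by
  have h1 : ((Finset.univ.filter fun j => d j = β).card : ℝ)
      = ∑ j, ∑ i, if d j = β then P i j else 0 := by
    rw [Finset.card_filter, Nat.cast_sum]
    refine Finset.sum_congr rfl fun j _ => ?_
    split_ifs <;> simp [hcol]
  have h2 : ((Finset.univ.filter fun i => d' i = β).card : ℝ)
      = ∑ i, ∑ j, if d' i = β then P i j else 0 := by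
    rw [Finset.card_filter, Nat.cast_sum]
    refine Finset.sum_congr rfl fun i _ => ?_
    split_ifs <;> simp [hrow]
  have h3 : ((Finset.univ.filter fun j => d j = β).card : ℝ)
      = (Finset.univ.filter fun i => d' i = β).card := by
    rw [h1, h2, Finset.sum_comm]
    refine Finset.sum_congr rfl fun i _ => Finset.sum_congr rfl fun j _ => ?_
    by_cases h : P i j = 0
    · simp [h]
    · rw [hP i j h]
  exact_mod_cast h3

theorem IsUnitaryM.mul_conjTranspose {m : Type*} [Fintype m] [DecidableEq m]
    {U : Matrix m m ℍ[ℝ]} (hU : IsUnitaryM U) : U * Uᴴ = 1 :=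
  mul_eq_one_comm.1 hU

theorem IsUnitaryM.sum_normSq_row {m : Type*} [Fintype m] [DecidableEq m]
    {U : Matrix m m ℍ[ℝ]} (hU : IsUnitaryM U) (i : m) :
    ∑ j, Quaternion.normSq (U i j) = 1 := by
  have h := star_dotProduct_self_eq_sum (star (U i))
  have h' : star (star (U i)) ⬝ᵥ star (U i) = 1 := by
    rw [star_star]
    exact (congrFun (congrFun hU.mul_conjTranspose i) i).trans (one_apply_eq i)
  simpa using congrArg QuaternionAlgebra.re (h.symm.trans h')

theorem IsUnitaryM.sum_normSq_col {m : Type*} [Fintype m] [DecidableEq m]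
    {U : Matrix m m ℍ[ℝ]} (hU : IsUnitaryM U) (j : m) :
    ∑ i, Quaternion.normSq (U i j) = 1 := by
  have h := star_dotProduct_self_eq_sum fun i => U i j
  have h' : star (fun i => U i j) ⬝ᵥ (fun i => U i j) = 1 :=
    (congrFun (congrFun hU j) j).trans (one_apply_eq j)
  simpa using congrArg QuaternionAlgebra.re (h.symm.trans h')

/-- Unitarily similar real diagonal quaternion matrices have the same diagonal entries with
multiplicity. -/
theorem card_fiber_eq_of_diagonal_conj {m : Type*} [Fintype m] [DecidableEq m]
    {U V : Matrix m m ℍ[ℝ]} (hU : IsUnitaryM U) (hV : IsUnitaryM V) {d d' : m → ℝ}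
    (h : Uᴴ * diagonal (fun i => (d i : ℍ[ℝ])) * U
      = Vᴴ * diagonal (fun i => (d' i : ℍ[ℝ])) * V) (β : ℝ) :
    (Finset.univ.filter fun j => d j = β).card = (Finset.univ.filter fun i => d' i = β).card := by
  set D := diagonal (fun i => (d i : ℍ[ℝ])) with hD
  set D' := diagonal (fun i => (d' i : ℍ[ℝ])) with hD'
  have hW : IsUnitaryM (V * Uᴴ) := by
    rw [IsUnitaryM, conjTranspose_mul, conjTranspose_conjTranspose, Matrix.mul_assoc,
      ← Matrix.mul_assoc Vᴴ, show Vᴴ * V = 1 from hV, Matrix.one_mul, hU.mul_conjTranspose]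
  have hcomm : V * Uᴴ * D = D' * (V * Uᴴ) := by
    calc V * Uᴴ * D = V * (Uᴴ * D * (U * Uᴴ)) := by
          rw [hU.mul_conjTranspose, Matrix.mul_one, Matrix.mul_assoc]
      _ = V * (Uᴴ * D * U) * Uᴴ := by simp only [Matrix.mul_assoc]
      _ = (V * Vᴴ) * D' * (V * Uᴴ) := by rw [h]; simp only [Matrix.mul_assoc]
      _ = D' * (V * Uᴴ) := by rw [hV.mul_conjTranspose, Matrix.one_mul]
  refine card_fiber_eq_of_doublyStochastic (P := fun i j => Quaternion.normSq ((V * Uᴴ) i j))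
    hW.sum_normSq_row hW.sum_normSq_col (fun i j hij => ?_) β
  have hij' : (V * Uᴴ) i j ≠ 0 := fun h0 => hij (Quaternion.normSq_eq_zero.2 h0)
  have hentry := congrFun (congrFun hcomm i) j
  rw [hD, hD', mul_diagonal, diagonal_mul, Quaternion.mul_coe_eq_smul,
    Quaternion.coe_mul_eq_smul] at hentry
  exact (smul_left_injective ℝ hij' hentry).symm

/-- The diagonal of `Nᴴ N` for the canonical matrix `N`. -/
def nilCanonGram (p r : ℕ) (b : Fin p → ℝ) : (Fin 2 × Fin p) ⊕ Fin r → ℝ :=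
  Sum.elim (fun k => ![0, b k.2 ^ 2] k.1) 0

theorem nilCanon_conjTranspose_mul_self (p r : ℕ) (b : Fin p → ℝ) :
    (nilCanon p r b)ᴴ * nilCanon p r b = diagonal fun k => (nilCanonGram p r b k : ℍ[ℝ]) := by
  ext1 i j
  rw [Matrix.mul_apply]
  rcases i with ⟨i, s⟩ | i <;> rcases j with ⟨j, t⟩ | j
  · fin_cases i <;> fin_cases j <;> rcases eq_or_ne s t with rfl | h
    all_goals simp [nilCanon, nilCanonGram, Fintype.sum_sum_type, Fintype.sum_prod_type,
      blockDiagonal_apply, pow_two]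
    all_goals simp [h, h.symm]
  · simp [nilCanon, nilCanonGram, Fintype.sum_sum_type]
  · simp [nilCanon, nilCanonGram, Fintype.sum_sum_type]
  · simp [nilCanon, nilCanonGram, Fintype.sum_sum_type, diagonal_apply]

theorem conj_nilCanon_gram {m : Type*} [Fintype m] [DecidableEq m] {A U : Matrix m m ℍ[ℝ]}
    {p r : ℕ} {b : Fin p → ℝ} {e : ((Fin 2 × Fin p) ⊕ Fin r) ≃ m} (hU : IsUnitaryM U)
    (h : A = Uᴴ * (nilCanon p r b).submatrix e.symm e.symm * U) :
    Aᴴ * A = Uᴴ * diagonal (fun i => (nilCanonGram p r b (e.symm i) : ℍ[ℝ])) * U := by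
  have hd : diagonal (fun i => (nilCanonGram p r b (e.symm i) : ℍ[ℝ]))
      = ((nilCanon p r b).submatrix e.symm e.symm)ᴴ
        * (nilCanon p r b).submatrix e.symm e.symm := by
    rw [conjTranspose_submatrix, submatrix_mul_equiv, nilCanon_conjTranspose_mul_self]
    exact (submatrix_diagonal_equiv (fun k => (nilCanonGram p r b k : ℍ[ℝ])) e.symm).symm
  rw [hd, h]
  simp only [conjTranspose_mul, conjTranspose_conjTranspose, Matrix.mul_assoc]
  rw [← Matrix.mul_assoc U Uᴴ, hU.mul_conjTranspose, Matrix.one_mul]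

theorem card_fiber_nilCanonGram {m : Type*} [Fintype m] {p r : ℕ} {b : Fin p → ℝ}
    (hb : ∀ t, 0 < b t) (e : ((Fin 2 × Fin p) ⊕ Fin r) ≃ m) {β : ℝ} (hβ : 0 < β) :
    (Finset.univ.filter fun t => b t = β).card
      = (Finset.univ.filter fun i => nilCanonGram p r b (e.symm i) = β ^ 2).card := by
  refine Finset.card_bij (fun t _ => e (Sum.inl (1, t))) ?_ ?_ ?_
  · intro t ht
    simp only [Finset.mem_filter, Finset.mem_univ, true_and] at ht
    refine Finset.mem_filter.2 ⟨Finset.mem_univ _, ?_⟩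
    simp [nilCanonGram, ht]
  · intro s _ t _ h
    simpa using h
  · intro i hi
    obtain ⟨k, rfl⟩ := e.surjective i
    simp only [Finset.mem_filter, Finset.mem_univ, true_and, e.symm_apply_apply] at hi
    rcases k with ⟨a, t⟩ | k
    · fin_cases a
      · exact absurd hi (pow_pos hβ 2).ne
      · exact ⟨t, by simpa using (pow_left_inj₀ (hb t).le hβ.le two_ne_zero).1 hi, rfl⟩
    · exact absurd hi (pow_pos hβ 2).ne

theorem exists_equiv_of_unitarilySimilar_nilCanon {m : Type*} [Fintype m] [DecidableEq m]
    {A : Matrix m m ℍ[ℝ]} {p r p' r' : ℕ} {b : Fin p → ℝ} {b' : Fin p' → ℝ}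
    {e : ((Fin 2 × Fin p) ⊕ Fin r) ≃ m} {e' : ((Fin 2 × Fin p') ⊕ Fin r') ≃ m}
    (hb : ∀ t, 0 < b t) (hb' : ∀ t, 0 < b' t)
    (h : UnitarilySimilar A ((nilCanon p r b).submatrix e.symm e.symm))
    (h' : UnitarilySimilar A ((nilCanon p' r' b').submatrix e'.symm e'.symm)) :
    ∃ σ : Fin p ≃ Fin p', ∀ t, b t = b' (σ t) := by
  obtain ⟨U, hU, hA⟩ := h
  obtain ⟨V, hV, hA'⟩ := h'
  have hcard : ∀ β, Fintype.card {t // b t = β} = Fintype.card {t // b' t = β} := by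
    intro β
    rcases lt_or_ge 0 β with hβ | hβ
    · rw [Fintype.card_subtype, Fintype.card_subtype, card_fiber_nilCanonGram hb e hβ,
        card_fiber_nilCanonGram hb' e' hβ]
      exact card_fiber_eq_of_diagonal_conj hU hV
        ((conj_nilCanon_gram hU hA).symm.trans (conj_nilCanon_gram hV hA')) _
    · have : IsEmpty {t // b t = β} := ⟨fun t => absurd (hb t.1) (by rw [t.2]; exact hβ.not_gt)⟩
      have : IsEmpty {t // b' t = β} := ⟨fun t => absurd (hb' t.1) (by rw [t.2]; exact hβ.not_gt)⟩
      simp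
  exact ⟨Equiv.ofFiberEquiv fun β => Fintype.equivOfCardEq (hcard β),
    fun t => (Equiv.ofFiberEquiv_map _ t).symm⟩

end Uniqueness

/-- **Theorem 3.1(b).** Every self-annihilating quaternion matrix (`A² = 0`) is unitarily
similar to a direct sum of blocks `[[0,b],[0,0]]` (`b > 0`) and `[0]`, and this direct sum
is uniquely determined up to permutation of the summands. -/
theorem self_annihilating_canonical_form {n : ℕ} (A : Matrix (Fin n) (Fin n) ℍ[ℝ])
    (hA : A * A = 0) :
    ∃ (p r : ℕ) (b : Fin p → ℝ) (e : ((Fin 2 × Fin p) ⊕ Fin r) ≃ Fin n),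
      (∀ t, 0 < b t) ∧
      UnitarilySimilar A ((nilCanon p r b).submatrix e.symm e.symm) ∧
      ∀ (p' r' : ℕ) (b' : Fin p' → ℝ) (e' : ((Fin 2 × Fin p') ⊕ Fin r') ≃ Fin n),
        (∀ t, 0 < b' t) →
        UnitarilySimilar A ((nilCanon p' r' b').submatrix e'.symm e'.symm) →
        p = p' ∧ r = r' ∧ ∃ σ : Fin p ≃ Fin p', ∀ t, b t = b' (σ t) := by
  obtain ⟨p, b, f, hb, hf, h0, h1, hker⟩ := exists_singular_pairs hA
  have hle := hf.card_le
  obtain ⟨g, -, hfg, -⟩ := hf.exists_extension (H := 0) conjTranspose_zero (c := 0)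
    (fun i => by simp) (Fintype.card (Fin n) - Fintype.card (Fin 2 × Fin p)) (by omega)
  have hg : ∀ i, A *ᵥ g i = 0 := fun i => hker _ fun k => by
    simpa using hfg (Sum.inl k) (Sum.inr i)
  have e : ((Fin 2 × Fin p) ⊕ Fin (Fintype.card (Fin n) - Fintype.card (Fin 2 × Fin p))) ≃ Fin n :=
    Fintype.equivOfCardEq (by rw [Fintype.card_sum, Fintype.card_fin (_ - _)]; omega)
  have hsim := hfg.unitarilySimilar e (mul_nilCanon_eq h0 h1 hg)
  refine ⟨p, _, b, e, hb, hsim, fun p' r' b' e' hb' hsim' => ?_⟩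
  obtain ⟨σ, hσ⟩ := exists_equiv_of_unitarilySimilar_nilCanon hb hb' hsim hsim'
  have hp : p = p' := by simpa using Fintype.card_congr σ
  have hr := Fintype.card_congr (e.trans e'.symm)
  rw [Fintype.card_sum, Fintype.card_sum, Fintype.card_fin r', Fintype.card_fin (_ - _)] at hr
  subst hp
  exact ⟨rfl, by omega, σ, hσ⟩
end
end

section
/- Let λ be a real number and let A be an n×n quaternion matrix with (A − λI)² = 0. Then A is unitarily similar to a direct sum of matrices, each of which is one of: the 2×2 matrix [[λ, b],[0, λ]] with b a positive real number, or the 1×1 matrix [λ]. -/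
open Matrix
open scoped Quaternion

noncomputable section

/-- The direct sum of `p` blocks `[[λ, b t],[0, λ]]` and `r` blocks `[λ]`. -/
def lamCanon (lam : ℝ) (p r : ℕ) (b : Fin p → ℝ) :
    Matrix ((Fin 2 × Fin p) ⊕ Fin r) ((Fin 2 × Fin p) ⊕ Fin r) ℍ[ℝ] :=
  Matrix.fromBlocks
    (Matrix.blockDiagonal fun t => !![(lam : ℍ[ℝ]), (b t : ℍ[ℝ]); 0, (lam : ℍ[ℝ])]) 0 0
    (Matrix.diagonal fun _ => (lam : ℍ[ℝ]))

section

variable {n : ℕ}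

/-- The quaternion inner product on row vectors, linear in the first argument. -/
def rowInner (v w : Fin n → ℍ[ℝ]) : ℍ[ℝ] := v ⬝ᵥ star w

/-- The squared Euclidean norm of a quaternion vector. -/
def rowNormSq (v : Fin n → ℍ[ℝ]) : ℝ := ∑ i, Quaternion.normSq (v i)

lemma rowInner_add_left (u v w : Fin n → ℍ[ℝ]) :
    rowInner (u + v) w = rowInner u w + rowInner v w := add_dotProduct _ _ _

lemma rowInner_smul_left (c : ℍ[ℝ]) (v w : Fin n → ℍ[ℝ]) :
    rowInner (c • v) w = c * rowInner v w := smul_dotProduct _ _ _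

lemma rowInner_zero_left (w : Fin n → ℍ[ℝ]) : rowInner 0 w = 0 := zero_dotProduct _

lemma star_rowInner (v w : Fin n → ℍ[ℝ]) : star (rowInner v w) = rowInner w v := by
  simp [rowInner, dotProduct]

lemma rowInner_smul_right (c : ℍ[ℝ]) (v w : Fin n → ℍ[ℝ]) :
    rowInner v (c • w) = rowInner v w * star c := by
  rw [← star_rowInner, rowInner_smul_left, star_mul, star_rowInner]

lemma rowInner_eq_zero_symm {v w : Fin n → ℍ[ℝ]} (h : rowInner v w = 0) : rowInner w v = 0 := by
  rw [← star_rowInner, h, star_zero]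

lemma rowInner_self (v : Fin n → ℍ[ℝ]) : rowInner v v = (rowNormSq v : ℍ[ℝ]) := by
  simp only [rowInner, dotProduct, rowNormSq, Pi.star_apply, Quaternion.self_mul_star]
  exact (map_sum (algebraMap ℝ ℍ[ℝ]) _ _).symm

lemma rowNormSq_nonneg (v : Fin n → ℍ[ℝ]) : 0 ≤ rowNormSq v :=
  Finset.sum_nonneg fun _ _ => Quaternion.normSq_nonneg

lemma rowNormSq_eq_zero {v : Fin n → ℍ[ℝ]} : rowNormSq v = 0 ↔ v = 0 := by
  rw [rowNormSq, Finset.sum_eq_zero_iff_of_nonneg fun _ _ => Quaternion.normSq_nonneg]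
  simp [funext_iff]

lemma rowNormSq_pos {v : Fin n → ℍ[ℝ]} (h : v ≠ 0) : 0 < rowNormSq v :=
  (rowNormSq_nonneg v).lt_of_ne fun h0 => h (rowNormSq_eq_zero.1 h0.symm)

lemma rowNormSq_smul (c : ℍ[ℝ]) (v : Fin n → ℍ[ℝ]) :
    rowNormSq (c • v) = Quaternion.normSq c * rowNormSq v := by
  simp [rowNormSq, Finset.mul_sum]

lemma rowNormSq_add (v w : Fin n → ℍ[ℝ]) :
    rowNormSq (v + w) = rowNormSq v + rowNormSq w + 2 * (rowInner w v).re := by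
  have h := rowInner_self (v + w)
  have h' : rowInner (v + w) (v + w) =
      rowInner v v + rowInner w w + (rowInner w v + star (rowInner w v)) := by
    rw [star_rowInner]
    simp only [rowInner, star_add, add_dotProduct, dotProduct_add]
    abel
  rw [h', rowInner_self, rowInner_self] at h
  have := congrArg QuaternionAlgebra.re h
  simp at this
  linarith

lemma continuous_rowNormSq : Continuous (rowNormSq (n := n)) :=
  continuous_finsetSum _ fun i _ => Quaternion.continuous_normSq.comp (continuous_apply i)

lemma isCompact_rowNormSq_sphere : IsCompact {v : Fin n → ℍ[ℝ] | rowNormSq v = 1} := by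
  have : ProperSpace ℍ[ℝ] := FiniteDimensional.proper ℝ _
  refine Metric.isCompact_of_isClosed_isBounded
    (isClosed_eq continuous_rowNormSq continuous_const) ?_
  refine (Metric.isBounded_closedBall (x := (0 : Fin n → ℍ[ℝ])) (r := 1)).subset fun v hv => ?_
  rw [mem_closedBall_zero_iff, pi_norm_le_iff_of_nonneg zero_le_one]
  intro i
  have h1 : Quaternion.normSq (v i) ≤ rowNormSq v :=
    Finset.single_le_sum (f := fun i => Quaternion.normSq (v i))
      (fun _ _ => Quaternion.normSq_nonneg) (Finset.mem_univ i)
  rw [show rowNormSq v = 1 from hv, Quaternion.normSq_eq_norm_mul_self] at h1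
  nlinarith [norm_nonneg (v i)]

/-- If a row attains the maximum of `‖w B‖² / ‖w‖²` on `W`, it is a singular vector of `B`. -/
lemma rowInner_vecMul_of_maximal {B : Matrix (Fin n) (Fin n) ℍ[ℝ]}
    {W : Submodule ℍ[ℝ] (Fin n → ℍ[ℝ])} {M : ℝ} {x : Fin n → ℍ[ℝ]} (hxW : x ∈ W)
    (hx : rowNormSq (x ᵥ* B) = M * rowNormSq x)
    (hmax : ∀ w ∈ W, rowNormSq (w ᵥ* B) ≤ M * rowNormSq w) {w : Fin n → ℍ[ℝ]} (hw : w ∈ W) :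
    rowInner (w ᵥ* B) (x ᵥ* B) = M * rowInner w x := by
  set h : ℍ[ℝ] := M * rowInner w x - rowInner (w ᵥ* B) (x ᵥ* B) with hh
  suffices h = 0 from (sub_eq_zero.1 this).symm
  have key : ∀ c : ℍ[ℝ], 0 ≤ Quaternion.normSq c * (M * rowNormSq w - rowNormSq (w ᵥ* B))
      + 2 * (c * h).re := by
    intro c
    have h1 := hmax (x + c • w) (W.add_mem hxW (W.smul_mem c hw))
    rw [add_vecMul, smul_vecMul, rowNormSq_add, rowNormSq_add, rowNormSq_smul, rowNormSq_smul,
      rowInner_smul_left, rowInner_smul_left, hx] at h1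
    have h2 : (c * h).re = M * (c * rowInner w x).re
        - (c * rowInner (w ᵥ* B) (x ᵥ* B)).re := by
      rw [hh, mul_sub, Quaternion.re_sub, ← mul_assoc, ← Quaternion.coe_commutes, mul_assoc,
        Quaternion.coe_mul_eq_smul, Quaternion.re_smul, smul_eq_mul]
    rw [h2]
    linarith
  by_contra hne
  have hpos : 0 < Quaternion.normSq h :=
    Quaternion.normSq_nonneg.lt_of_ne fun h0 => hne (Quaternion.normSq_eq_zero.1 h0.symm)
  set F := M * rowNormSq w - rowNormSq (w ᵥ* B) with hF
  have hF0 : 0 ≤ F := sub_nonneg.2 (hmax w hw)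
  have := key (((-(1 / (F + 1)) : ℝ) : ℍ[ℝ]) * star h)
  rw [map_mul, Quaternion.normSq_coe, Quaternion.normSq_star,
    mul_assoc (_ : ℍ[ℝ]), Quaternion.star_mul_self,
    ← Quaternion.coe_mul, Quaternion.re_coe] at this
  have h3 : (-(1 / (F + 1))) ^ 2 * Quaternion.normSq h * F
      + 2 * (-(1 / (F + 1)) * Quaternion.normSq h)
      = - (Quaternion.normSq h * (F + 2) / (F + 1) ^ 2) := by
    field_simp
    ring
  rw [h3] at this
  have : 0 < Quaternion.normSq h * (F + 2) / (F + 1) ^ 2 := by positivity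
  linarith

lemma exists_maximal_row (B : Matrix (Fin n) (Fin n) ℍ[ℝ])
    (W : Submodule ℍ[ℝ] (Fin n → ℍ[ℝ])) (hWc : IsClosed (W : Set (Fin n → ℍ[ℝ])))
    (hne : ∃ w ∈ W, w ≠ 0) :
    ∃ x ∈ W, rowNormSq x = 1 ∧
      ∀ w ∈ W, rowNormSq (w ᵥ* B) ≤ rowNormSq (x ᵥ* B) * rowNormSq w := by
  have hscale : ∀ w : Fin n → ℍ[ℝ], w ≠ 0 →
      Quaternion.normSq (((√(rowNormSq w))⁻¹ : ℝ) : ℍ[ℝ]) = (rowNormSq w)⁻¹ := by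
    intro w _
    rw [Quaternion.normSq_coe, inv_pow, Real.sq_sqrt (rowNormSq_nonneg w)]
  have hunit : ∀ w ∈ W, w ≠ 0 → ((((√(rowNormSq w))⁻¹ : ℝ) : ℍ[ℝ]) • w) ∈
      {v : Fin n → ℍ[ℝ] | rowNormSq v = 1} ∩ W := by
    intro w hw h0
    refine ⟨?_, W.smul_mem _ hw⟩
    rw [Set.mem_ofPred_eq, rowNormSq_smul, hscale w h0, inv_mul_cancel₀ (rowNormSq_pos h0).ne']
  obtain ⟨w₀, hw₀, hw₀'⟩ := hne
  have hcont : Continuous fun v : Fin n → ℍ[ℝ] => rowNormSq (v ᵥ* B) :=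
    continuous_rowNormSq.comp (Continuous.matrix_vecMul continuous_id continuous_const)
  obtain ⟨x, ⟨hx1, hxW⟩, hmax⟩ := (isCompact_rowNormSq_sphere.inter_right hWc).exists_isMaxOn
    ⟨_, hunit w₀ hw₀ hw₀'⟩ hcont.continuousOn
  refine ⟨x, hxW, hx1, fun w hw => ?_⟩
  by_cases h0 : w = 0
  · simp [h0, rowNormSq]
  have h1 := hmax (hunit w hw h0)
  simp only [Set.mem_ofPred_eq, smul_vecMul, rowNormSq_smul, hscale w h0] at h1
  have h2 := rowNormSq_pos h0
  rwa [inv_mul_le_iff₀ h2, mul_comm] at h1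

/-- A nonzero square-zero map on an invariant subspace splits off a nilpotent `2 × 2` block. -/
lemma exists_orthonormal_pair {B : Matrix (Fin n) (Fin n) ℍ[ℝ]} (hB : B * B = 0)
    {W : Submodule ℍ[ℝ] (Fin n → ℍ[ℝ])} (hWc : IsClosed (W : Set (Fin n → ℍ[ℝ])))
    (hinv : ∀ w ∈ W, w ᵥ* B ∈ W) (hne : ∃ w ∈ W, w ᵥ* B ≠ 0) :
    ∃ b : ℝ, 0 < b ∧ ∃ x ∈ W, ∃ y ∈ W, rowInner x x = 1 ∧ rowInner y y = 1 ∧ rowInner x y = 0 ∧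
      x ᵥ* B = (b : ℍ[ℝ]) • y ∧ y ᵥ* B = 0 ∧
      ∀ w ∈ W, rowInner w x = 0 → rowInner (w ᵥ* B) x = 0 ∧ rowInner (w ᵥ* B) y = 0 := by
  obtain ⟨w₀, hw₀, hw₀B⟩ := hne
  obtain ⟨x, hxW, hx1, hmax⟩ := exists_maximal_row B W hWc
    ⟨w₀, hw₀, fun h => hw₀B (by rw [h, zero_vecMul])⟩
  have hsing := fun w (hw : w ∈ W) =>
    rowInner_vecMul_of_maximal hxW (by rw [hx1, mul_one]) hmax hw
  set M := rowNormSq (x ᵥ* B) with hM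
  have hMpos : 0 < M := by
    have h1 := hmax w₀ hw₀
    have h2 := rowNormSq_pos hw₀B
    have h3 := rowNormSq_nonneg w₀
    by_contra h
    nlinarith
  have hBB : ∀ w : Fin n → ℍ[ℝ], (w ᵥ* B) ᵥ* B = 0 := fun w => by
    rw [vecMul_vecMul, hB, vecMul_zero]
  have hker : ∀ w ∈ W, w ᵥ* B = 0 → rowInner w x = 0 := by
    intro w hw h0
    have h1 := hsing w hw
    rw [h0, rowInner_zero_left, eq_comm, mul_eq_zero] at h1
    exact h1.resolve_left (fun h => hMpos.ne' (Quaternion.coe_injective h))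
  have hbpos : 0 < √M := Real.sqrt_pos.2 hMpos
  refine ⟨√M, hbpos, x, hxW, (((√M)⁻¹ : ℝ) : ℍ[ℝ]) • (x ᵥ* B), W.smul_mem _ (hinv x hxW),
    ?_, ?_, ?_, ?_, ?_, ?_⟩
  · rw [rowInner_self, hx1, Quaternion.coe_one]
  · rw [rowInner_self, rowNormSq_smul, ← hM, Quaternion.normSq_coe, inv_pow,
      Real.sq_sqrt hMpos.le, inv_mul_cancel₀ hMpos.ne', Quaternion.coe_one]
  · rw [rowInner_smul_right, rowInner_eq_zero_symm (hker _ (hinv x hxW) (hBB x)), zero_mul]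
  · rw [smul_smul, ← Quaternion.coe_mul, mul_inv_cancel₀ hbpos.ne', Quaternion.coe_one, one_smul]
  · rw [smul_vecMul, hBB, smul_zero]
  · intro w hw h0
    refine ⟨hker _ (hinv w hw) (hBB w), ?_⟩
    rw [rowInner_smul_right, hsing w hw, h0, mul_zero, zero_mul]

/-- The orthogonal complement of a family of rows. -/
def rowPerp {ι : Type*} (X : ι → Fin n → ℍ[ℝ]) : Submodule ℍ[ℝ] (Fin n → ℍ[ℝ]) where
  carrier := {w | ∀ i, rowInner w (X i) = 0}
  add_mem' hv hw i := by rw [rowInner_add_left, hv i, hw i, add_zero]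
  zero_mem' i := rowInner_zero_left _
  smul_mem' c w hw i := by rw [rowInner_smul_left, hw i, mul_zero]

lemma mem_rowPerp {ι : Type*} {X : ι → Fin n → ℍ[ℝ]} {w : Fin n → ℍ[ℝ]} :
    w ∈ rowPerp X ↔ ∀ i, rowInner w (X i) = 0 := Iff.rfl

lemma isClosed_rowPerp {ι : Type*} (X : ι → Fin n → ℍ[ℝ]) :
    IsClosed (rowPerp X : Set (Fin n → ℍ[ℝ])) := by
  have : (rowPerp X : Set (Fin n → ℍ[ℝ])) = ⋂ i, {w | rowInner w (X i) = 0} := by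
    ext w
    simp [mem_rowPerp]
  rw [this]
  exact isClosed_iInter fun i =>
    isClosed_eq (continuous_id.dotProduct continuous_const) continuous_const

lemma exists_ne_zero_mem_rowPerp {ι : Type*} [Fintype ι] (X : ι → Fin n → ℍ[ℝ])
    (h : Fintype.card ι < n) : ∃ w ∈ rowPerp X, w ≠ 0 := by
  let f : (Fin n → ℍ[ℝ]) →ₗ[ℍ[ℝ]] (ι → ℍ[ℝ]) :=
    { toFun := fun w i => rowInner w (X i)
      map_add' := fun v w => funext fun i => rowInner_add_left v w (X i)
      map_smul' := fun c w => funext fun i => rowInner_smul_left c w (X i) }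
  have hf : LinearMap.ker f ≠ ⊥ := LinearMap.ker_ne_bot_of_finrank_lt (by simpa using h)
  obtain ⟨w, hw, hw0⟩ := Submodule.exists_mem_ne_zero_of_ne_bot hf
  exact ⟨w, fun i => congrFun (LinearMap.mem_ker.1 hw) i, hw0⟩

lemma card_le_of_rowInner_eq_ite {ι : Type*} [Fintype ι] [DecidableEq ι]
    {X : ι → Fin n → ℍ[ℝ]} (hX : ∀ i j, rowInner (X i) (X j) = if i = j then 1 else 0) :
    Fintype.card ι ≤ n := by
  have hli : LinearIndependent ℍ[ℝ] X := by
    rw [Fintype.linearIndependent_iff]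
    intro c hc j
    have h1 := congrArg (fun v => rowInner v (X j)) hc
    simp only [rowInner_zero_left] at h1
    rw [rowInner, sum_dotProduct] at h1
    simp only [smul_dotProduct] at h1
    change ∑ i, c i • rowInner (X i) (X j) = 0 at h1
    simpa [hX] using h1
  simpa using hli.fintype_card_le_finrank

/-- The family of rows made of the pairs `(x t, y t)` and the single rows `z s`. -/
def rowFrame {p r : ℕ} (x y : Fin p → Fin n → ℍ[ℝ]) (z : Fin r → Fin n → ℍ[ℝ]) :
    (Fin 2 × Fin p) ⊕ Fin r → Fin n → ℍ[ℝ] :=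
  Sum.elim (fun q => ![x q.2, y q.2] q.1) z

lemma mem_rowPerp_rowFrame {p r : ℕ} {x y : Fin p → Fin n → ℍ[ℝ]} {z : Fin r → Fin n → ℍ[ℝ]}
    {w : Fin n → ℍ[ℝ]} : w ∈ rowPerp (rowFrame x y z) ↔
      (∀ t, rowInner w (x t) = 0) ∧ (∀ t, rowInner w (y t) = 0) ∧ ∀ s, rowInner w (z s) = 0 := by
  simp [mem_rowPerp, rowFrame, Sum.forall, Prod.forall, Fin.forall_fin_two, and_assoc]

/-- An orthonormal family of rows on which `B` acts by nilpotent blocks of size at most `2`, and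
whose orthogonal complement is invariant under `B`. -/
structure IsBlockFrame (B : Matrix (Fin n) (Fin n) ℍ[ℝ]) {p r : ℕ} (b : Fin p → ℝ)
    (x y : Fin p → Fin n → ℍ[ℝ]) (z : Fin r → Fin n → ℍ[ℝ]) : Prop where
  pos : ∀ t, 0 < b t
  xx : ∀ s t, rowInner (x s) (x t) = if s = t then 1 else 0
  yy : ∀ s t, rowInner (y s) (y t) = if s = t then 1 else 0
  zz : ∀ s t, rowInner (z s) (z t) = if s = t then 1 else 0
  xy : ∀ s t, rowInner (x s) (y t) = 0
  xz : ∀ s t, rowInner (x s) (z t) = 0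
  yz : ∀ s t, rowInner (y s) (z t) = 0
  x_mul : ∀ t, x t ᵥ* B = (b t : ℍ[ℝ]) • y t
  y_mul : ∀ t, y t ᵥ* B = 0
  z_mul : ∀ t, z t ᵥ* B = 0
  inv : ∀ w ∈ rowPerp (rowFrame x y z), w ᵥ* B ∈ rowPerp (rowFrame x y z)

lemma IsBlockFrame.rowInner_rowFrame {B : Matrix (Fin n) (Fin n) ℍ[ℝ]} {p r : ℕ} {b : Fin p → ℝ}
    {x y : Fin p → Fin n → ℍ[ℝ]} {z : Fin r → Fin n → ℍ[ℝ]} (h : IsBlockFrame B b x y z)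
    (i j : (Fin 2 × Fin p) ⊕ Fin r) :
    rowInner (rowFrame x y z i) (rowFrame x y z j) = if i = j then 1 else 0 := by
  have yx := fun s t => rowInner_eq_zero_symm (h.xy s t)
  have zx := fun s t => rowInner_eq_zero_symm (h.xz s t)
  have zy := fun s t => rowInner_eq_zero_symm (h.yz s t)
  rcases i with ⟨i, s⟩ | s <;> rcases j with ⟨j, t⟩ | t
  · fin_cases i <;> fin_cases j <;> simp [rowFrame, h.xx, h.yy, h.xy, yx]
  · fin_cases i <;> simp [rowFrame, h.xz, h.yz]
  · fin_cases j <;> simp [rowFrame, zx, zy]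
  · simp [rowFrame, h.zz]

lemma IsBlockFrame.exists_extend {B : Matrix (Fin n) (Fin n) ℍ[ℝ]} (hB : B * B = 0) {p r : ℕ}
    {b : Fin p → ℝ} {x y : Fin p → Fin n → ℍ[ℝ]} {z : Fin r → Fin n → ℍ[ℝ]}
    (h : IsBlockFrame B b x y z) (hlt : 2 * p + r < n) :
    (∃ b' x' y', IsBlockFrame B (p := p + 1) b' x' y' z) ∨
      ∃ z', IsBlockFrame B (r := r + 1) b x y z' := by
  by_cases hW : ∃ w ∈ rowPerp (rowFrame x y z), w ᵥ* B ≠ 0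
  · left
    obtain ⟨b₀, hb₀, u, hu, v, hv, huu, hvv, huv, huB, hvB, hperp⟩ :=
      exists_orthonormal_pair hB (isClosed_rowPerp _) h.inv hW
    obtain ⟨ux, uy, uz⟩ := mem_rowPerp_rowFrame.1 hu
    obtain ⟨vx, vy, vz⟩ := mem_rowPerp_rowFrame.1 hv
    have xu := fun t => rowInner_eq_zero_symm (ux t)
    have yv := fun t => rowInner_eq_zero_symm (vy t)
    have xv := fun t => rowInner_eq_zero_symm (vx t)
    refine ⟨Fin.cons b₀ b, Fin.cons u x, Fin.cons v y, ?_⟩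
    constructor
    case inv =>
      intro w hw
      rw [mem_rowPerp_rowFrame] at hw ⊢
      simp only [Fin.forall_fin_succ, Fin.cons_zero, Fin.cons_succ] at hw ⊢
      obtain ⟨⟨hwu, hwx⟩, ⟨hwv, hwy⟩, hwz⟩ := hw
      have hw' := mem_rowPerp_rowFrame.2 ⟨hwx, hwy, hwz⟩
      obtain ⟨h1, h2, h3⟩ := mem_rowPerp_rowFrame.1 (h.inv w hw')
      obtain ⟨h4, h5⟩ := hperp w hw' hwu
      exact ⟨⟨h4, h1⟩, ⟨h5, h2⟩, h3⟩
    all_goals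
      simp [Fin.forall_fin_succ, hb₀, h.pos, h.xx, h.yy, h.zz, h.xy, h.xz, h.yz, h.x_mul, h.y_mul,
        h.z_mul, huu, hvv, huv, huB, hvB, ux, uy, uz, vy, vz, xu, yv, xv,
        (Fin.succ_ne_zero _).symm]
  · right
    push Not at hW
    obtain ⟨w, hw, hw0⟩ := exists_ne_zero_mem_rowPerp (rowFrame x y z) (by simpa using hlt)
    obtain ⟨u, hu, hu1, -⟩ := exists_maximal_row B _ (isClosed_rowPerp (rowFrame x y z))
      ⟨w, hw, hw0⟩
    obtain ⟨ux, uy, uz⟩ := mem_rowPerp_rowFrame.1 hu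
    have huu : rowInner u u = 1 := by rw [rowInner_self, hu1, Quaternion.coe_one]
    have xu := fun t => rowInner_eq_zero_symm (ux t)
    have yu := fun t => rowInner_eq_zero_symm (uy t)
    have zu := fun t => rowInner_eq_zero_symm (uz t)
    refine ⟨Fin.cons u z, ?_⟩
    constructor
    case inv =>
      intro w hw
      have hw' : w ∈ rowPerp (rowFrame x y z) := by
        rw [mem_rowPerp_rowFrame] at hw ⊢
        simp only [Fin.forall_fin_succ, Fin.cons_zero, Fin.cons_succ] at hw
        exact ⟨hw.1, hw.2.1, hw.2.2.2⟩
      rw [hW w hw']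
      exact Submodule.zero_mem _
    all_goals
      simp [Fin.forall_fin_succ, h.pos, h.xx, h.yy, h.zz, h.xy, h.xz, h.yz, h.x_mul, h.y_mul,
        h.z_mul, huu, hW u hu, uz, xu, yu, zu, (Fin.succ_ne_zero _).symm]

lemma IsBlockFrame.exists_complete {B : Matrix (Fin n) (Fin n) ℍ[ℝ]} (hB : B * B = 0) {p r : ℕ}
    {b : Fin p → ℝ} {x y : Fin p → Fin n → ℍ[ℝ]} {z : Fin r → Fin n → ℍ[ℝ]}
    (h : IsBlockFrame B b x y z) :
    ∃ (p' r' : ℕ) (b' : Fin p' → ℝ) (x' y' : Fin p' → Fin n → ℍ[ℝ]) (z' : Fin r' → Fin n → ℍ[ℝ]),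
      2 * p' + r' = n ∧ IsBlockFrame B b' x' y' z' := by
  have hle : 2 * p + r ≤ n := by
    simpa using card_le_of_rowInner_eq_ite h.rowInner_rowFrame
  rcases hle.eq_or_lt with heq | hlt
  · exact ⟨p, r, b, x, y, z, heq, h⟩
  · rcases h.exists_extend hB hlt with ⟨b', x', y', h'⟩ | ⟨z', h'⟩
    · exact h'.exists_complete hB
    · exact h'.exists_complete hB
termination_by n - (2 * p + r)

lemma exists_isBlockFrame {B : Matrix (Fin n) (Fin n) ℍ[ℝ]} (hB : B * B = 0) :
    ∃ (p r : ℕ) (b : Fin p → ℝ) (x y : Fin p → Fin n → ℍ[ℝ]) (z : Fin r → Fin n → ℍ[ℝ]),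
      2 * p + r = n ∧ IsBlockFrame B b x y z := by
  have h : IsBlockFrame B (p := 0) (r := 0) Fin.elim0 Fin.elim0 Fin.elim0 Fin.elim0 := by
    constructor
    case inv =>
      intro w _
      simp [mem_rowPerp_rowFrame]
    all_goals exact fun t => t.elim0
  exact h.exists_complete hB

lemma IsBlockFrame.rowFrame_vecMul {A : Matrix (Fin n) (Fin n) ℍ[ℝ]} {lam : ℝ} {p r : ℕ}
    {b : Fin p → ℝ} {x y : Fin p → Fin n → ℍ[ℝ]} {z : Fin r → Fin n → ℍ[ℝ]}
    (h : IsBlockFrame (A - (lam : ℍ[ℝ]) • 1) b x y z) (i : (Fin 2 × Fin p) ⊕ Fin r) :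
    rowFrame x y z i ᵥ* A = ∑ k, lamCanon lam p r b i k • rowFrame x y z k := by
  have hA : ∀ v : Fin n → ℍ[ℝ], v ᵥ* A = (lam : ℍ[ℝ]) • v + v ᵥ* (A - (lam : ℍ[ℝ]) • 1) := by
    intro v
    have : v ᵥ* ((lam : ℍ[ℝ]) • (1 : Matrix (Fin n) (Fin n) ℍ[ℝ])) = (lam : ℍ[ℝ]) • v := by
      ext1 j
      rw [smul_one_eq_diagonal, vecMul_diagonal, Pi.smul_apply, smul_eq_mul,
        Quaternion.coe_commutes]
    rw [vecMul_sub, this]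
    abel
  rw [hA, Fintype.sum_sum_type, Fintype.sum_prod_type, Fin.sum_univ_two]
  rcases i with ⟨i, t⟩ | t
  · fin_cases i <;>
      simp [rowFrame, lamCanon, h.x_mul, h.y_mul, blockDiagonal_apply, ite_smul]
  · simp [rowFrame, lamCanon, h.z_mul, diagonal_apply, ite_smul]

end

/-- If `λ` is real and `(A - λI)² = 0`, then `A` is unitarily similar to a direct sum of
blocks `[[λ,b],[0,λ]]` (`b > 0`) and `[λ]`. -/
theorem quadratic_real_eigenvalue_canonical_form {n : ℕ} (lam : ℝ)
    (A : Matrix (Fin n) (Fin n) ℍ[ℝ])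
    (hA : (A - (lam : ℍ[ℝ]) • 1) * (A - (lam : ℍ[ℝ]) • 1) = 0) :
    ∃ (p r : ℕ) (b : Fin p → ℝ) (e : ((Fin 2 × Fin p) ⊕ Fin r) ≃ Fin n),
      (∀ t, 0 < b t) ∧
      UnitarilySimilar A ((lamCanon lam p r b).submatrix e.symm e.symm) := by
  obtain ⟨p, r, b, x, y, z, hcard, h⟩ := exists_isBlockFrame hA
  let e : ((Fin 2 × Fin p) ⊕ Fin r) ≃ Fin n := Fintype.equivFinOfCardEq (by simpa using hcard)
  let U : Matrix (Fin n) (Fin n) ℍ[ℝ] := Matrix.of fun i => rowFrame x y z (e.symm i)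
  have hUU : U * Uᴴ = 1 := by
    ext1 i j
    change rowInner (rowFrame x y z (e.symm i)) (rowFrame x y z (e.symm j)) = _
    rw [h.rowInner_rowFrame, one_apply]
    simp
  have hU : Uᴴ * U = 1 := mul_eq_one_comm.1 hUU
  have hUA : U * A = (lamCanon lam p r b).submatrix e.symm e.symm * U := by
    ext1 i j
    have h1 := congrFun (h.rowFrame_vecMul (e.symm i)) j
    rw [Finset.sum_apply, ← e.symm.sum_comp] at h1
    exact h1
  exact ⟨p, r, b, e, h.pos, U, hU, by rw [Matrix.mul_assoc, ← hUA, ← Matrix.mul_assoc, hU, one_mul]⟩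
end
end

section
/- Let M be an n×n quaternion matrix that is nonderogatory, i.e., M is similar over ℍ to a direct sum J_{n₁}(λ₁) ⊕ ⋯ ⊕ J_{n_k}(λ_k) of Jordan blocks whose standard eigenvalues λ₁,…,λ_k are pairwise distinct complex numbers with nonnegative imaginary parts. Then M is unitarily similar to an upper triangular quaternion matrix A = (a_{lr}) whose diagonal entries λ_l = a_{ll} are complex numbers with nonnegative imaginary parts satisfying λ₁ ⪰ λ₂ ⪰ ⋯ ⪰ λ_n, and such that whenever λ_l = λ_{l+1}, the superdiagonal entry a_{l,l+1} does not lie in ℂj = {zj : z ∈ ℂ}. -/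
open Matrix
open scoped Quaternion

noncomputable section

/-- The embedding of `ℂ = ℝ + ℝi` into the quaternions. -/
def cq (z : ℂ) : ℍ[ℝ] := ⟨z.re, z.im, 0, 0⟩

/-- The quaternion unit `j`. -/
def jq : ℍ[ℝ] := ⟨0, 0, 1, 0⟩

/-- The ordering `⪰` on complex numbers: `a+bi ⪰ c+di` iff (`a ≥ c` and `b = d`) or `b > d`. -/
def csucceq (z w : ℂ) : Prop := (w.re ≤ z.re ∧ z.im = w.im) ∨ w.im < z.im

/-- The triangular form (2.1): `A` is upper triangular, its diagonal entries are complex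
with nonnegative imaginary parts, `⪰`-nonincreasing down the diagonal, and whenever two
consecutive diagonal entries coincide the corresponding superdiagonal entry is not in
`ℂj`. -/
def TriCanonForm {n : ℕ} (A : Matrix (Fin n) (Fin n) ℍ[ℝ]) (lam : Fin n → ℂ) : Prop :=
  (∀ r c : Fin n, c < r → A r c = 0) ∧
  (∀ l, A l l = cq (lam l)) ∧
  (∀ l, 0 ≤ (lam l).im) ∧
  (∀ (l : ℕ) (h : l + 1 < n), csucceq (lam ⟨l, Nat.lt_of_succ_lt h⟩) (lam ⟨l + 1, h⟩)) ∧
  (∀ (l : ℕ) (h : l + 1 < n), lam ⟨l, Nat.lt_of_succ_lt h⟩ = lam ⟨l + 1, h⟩ →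
      ¬∃ z : ℂ, A ⟨l, Nat.lt_of_succ_lt h⟩ ⟨l + 1, h⟩ = cq z * jq)

/-- `A` and `B` are similar over `ℍ`: `A = S⁻¹ * B * S` for some invertible `S`. -/
def SimilarQ {m : Type*} [Fintype m] [DecidableEq m] (A B : Matrix m m ℍ[ℝ]) : Prop :=
  ∃ S : (Matrix m m ℍ[ℝ])ˣ, A = (S⁻¹).val * B * S.val

/-- The direct sum of Jordan blocks `J_{m t}(μ t)` with complex eigenvalues, indexed by
the sigma type `Σ t, Fin (m t)`. -/
def jordanC {k : ℕ} (m : Fin k → ℕ) (mu : Fin k → ℂ) :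
    Matrix (Σ t : Fin k, Fin (m t)) (Σ t : Fin k, Fin (m t)) ℍ[ℝ] :=
  fun x y =>
    if x.1 = y.1 then
      if (x.2 : ℕ) = (y.2 : ℕ) then cq (mu x.1)
      else if (y.2 : ℕ) = (x.2 : ℕ) + 1 then 1 else 0
    else 0

/-- `M` is nonderogatory: it is similar over `ℍ` to a direct sum of Jordan blocks whose
standard eigenvalues (complex with nonnegative imaginary parts) are pairwise distinct. -/
def Nonderogatory {n : ℕ} (M : Matrix (Fin n) (Fin n) ℍ[ℝ]) : Prop :=
  ∃ (k : ℕ) (m : Fin k → ℕ) (mu : Fin k → ℂ) (e : Fin n ≃ Σ t : Fin k, Fin (m t)),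
    (∀ t, 0 < m t) ∧ Function.Injective mu ∧ (∀ t, 0 ≤ (mu t).im) ∧
    SimilarQ M ((jordanC m mu).submatrix e e)

/-- Gram–Schmidt over the quaternions: the columns of an injective quaternion matrix can be
orthonormalized by an upper triangular matrix with positive real diagonal. -/
lemma exists_upperTriangular_orthonormalize {N : ℕ} :
    ∀ {n : ℕ} (B : Matrix (Fin N) (Fin n) ℍ[ℝ]), (∀ c, B *ᵥ c = 0 → c = 0) →
      ∃ T : Matrix (Fin n) (Fin n) ℍ[ℝ], (∀ r c, c < r → T r c = 0) ∧
        (∀ i, ∃ t : ℝ, 0 < t ∧ T i i = (t : ℍ[ℝ])) ∧ (B * T)ᴴ * (B * T) = 1 := by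
  intro n
  induction n with
  | zero =>
    intro B _
    exact ⟨0, fun r => r.elim0, fun r => r.elim0, by ext1 i; exact i.elim0⟩
  | succ n ih =>
    intro B hB
    obtain ⟨T₀, hup, hdiag, horth⟩ := ih (B.submatrix id Fin.castSucc) (by
      intro c hc
      have h := hB (Fin.snoc c 0) (by
        ext1 k
        simpa [Matrix.mulVec, dotProduct, Fin.sum_univ_castSucc] using congrFun hc k)
      ext1 i
      simpa using congrFun h i.castSucc)
    set B₀ := B.submatrix id Fin.castSucc with hB₀
    set Q := B₀ * T₀ with hQ
    set b : Fin N → ℍ[ℝ] := fun k => B k (Fin.last n) with hb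
    set w : Fin n → ℍ[ℝ] := -(T₀ *ᵥ (Qᴴ *ᵥ b)) with hw
    set d : Fin N → ℍ[ℝ] := b - Q *ᵥ (Qᴴ *ᵥ b) with hd
    have hBw : ∀ k, ∑ i, B k (Fin.castSucc i) * w i + b k = d k := by
      intro k
      have h : B₀ *ᵥ w = -(Q *ᵥ (Qᴴ *ᵥ b)) := by
        rw [hw, Matrix.mulVec_neg, Matrix.mulVec_mulVec]
      have h' : ∑ i, B k (Fin.castSucc i) * w i = -((Q *ᵥ (Qᴴ *ᵥ b)) k) := congrFun h k
      rw [h', hd, Pi.sub_apply]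
      abel
    have hd0 : d ≠ 0 := by
      intro h0
      have h := hB (Fin.snoc w 1) (by
        ext1 k
        have := hBw k
        simp only [h0] at this
        simpa [Matrix.mulVec, dotProduct, Fin.sum_univ_castSucc] using this)
      simpa using congrFun h (Fin.last n)
    have hQd : Qᴴ *ᵥ d = 0 := by
      rw [hd, Matrix.mulVec_sub, Matrix.mulVec_mulVec, horth, Matrix.one_mulVec, sub_self]
    have hQd' : ∀ j, ∑ k, star (Q k j) * d k = 0 := fun j => congrFun hQd j
    have hQd'' : ∀ j, ∑ k, star (d k) * Q k j = 0 := by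
      intro j
      have := congrArg star (hQd' j)
      simpa [star_sum] using this
    have hr : 0 < ∑ k, Quaternion.normSq (d k) := by
      obtain ⟨k, hk⟩ := Function.ne_iff.1 hd0
      exact Finset.sum_pos' (fun _ _ => Quaternion.normSq_nonneg)
        ⟨k, Finset.mem_univ k, lt_of_le_of_ne Quaternion.normSq_nonneg
          (Ne.symm (Quaternion.normSq_ne_zero.2 hk))⟩
    set r := ∑ k, Quaternion.normSq (d k) with hr_def
    have hdd : ∑ k, star (d k) * d k = (r : ℍ[ℝ]) := by
      simp only [Quaternion.star_mul_self, hr_def]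
      exact (map_sum (algebraMap ℝ ℍ[ℝ]) _ _).symm
    have hs : 0 < (Real.sqrt r)⁻¹ := inv_pos.2 (Real.sqrt_pos.2 hr)
    set s := (Real.sqrt r)⁻¹ with hs_def
    have hss : s * r * s = 1 := by
      have : Real.sqrt r ≠ 0 := (Real.sqrt_pos.2 hr).ne'
      rw [hs_def]
      field_simp
      exact (Real.sq_sqrt hr.le).symm
    refine ⟨Matrix.of fun i j =>
      Fin.lastCases (motive := fun _ => ℍ[ℝ])
        ((Fin.snoc (fun i => w i * (s : ℍ[ℝ])) (s : ℍ[ℝ]) : Fin (n + 1) → ℍ[ℝ]) i)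
        (fun j => (Fin.snoc (fun i => T₀ i j) 0 : Fin (n + 1) → ℍ[ℝ]) i) j, ?_, ?_, ?_⟩
    · intro i j hij
      induction j using Fin.lastCases with
      | last => exact absurd hij (not_lt.2 (Fin.le_last i))
      | cast j =>
        induction i using Fin.lastCases with
        | last => simp
        | cast i => simpa using hup i j (by simpa using hij)
    · intro i
      induction i using Fin.lastCases with
      | last => exact ⟨s, hs, by simp⟩
      | cast i => simpa using hdiag i
    · set T : Matrix (Fin (n + 1)) (Fin (n + 1)) ℍ[ℝ] := Matrix.of _ with hT
      have hcast : ∀ k (j : Fin n), (B * T) k j.castSucc = Q k j := by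
        intro k j
        simp [hT, Matrix.mul_apply, Fin.sum_univ_castSucc, hQ, hB₀]
      have hlast : ∀ k, (B * T) k (Fin.last n) = d k * (s : ℍ[ℝ]) := by
        intro k
        rw [← hBw k, add_mul, Finset.sum_mul]
        simp [hT, Matrix.mul_apply, Fin.sum_univ_castSucc, hb, mul_assoc]
      ext1 i j
      rw [Matrix.mul_apply]
      simp only [Matrix.conjTranspose_apply]
      induction i using Fin.lastCases with
      | last =>
        induction j using Fin.lastCases with
        | last =>
          simp only [hlast, star_mul, mul_assoc]
          rw [← Finset.mul_sum]
          simp only [← mul_assoc]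
          rw [← Finset.sum_mul, ← mul_assoc, hdd, Quaternion.star_coe, ← Quaternion.coe_mul,
            ← Quaternion.coe_mul, hss, Matrix.one_apply_eq, Quaternion.coe_one]
        | cast j =>
          simp only [hlast, hcast, star_mul, mul_assoc]
          rw [← Finset.mul_sum, hQd'' j, mul_zero,
            Matrix.one_apply_ne (Fin.castSucc_lt_last j).ne']
      | cast i =>
        induction j using Fin.lastCases with
        | last =>
          simp only [hlast, hcast, ← mul_assoc]
          rw [← Finset.sum_mul, hQd' i, zero_mul,
            Matrix.one_apply_ne (Fin.castSucc_lt_last i).ne]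
        | cast j =>
          simp only [hcast]
          have h := congrFun (congrFun horth i) j
          rw [Matrix.mul_apply] at h
          simpa [Matrix.one_apply] using h

/-- If `T * A` and `T` are upper triangular and `T` has nonzero diagonal entries, then `A` is upper
triangular. -/
lemma upperTriangular_of_mul_eq {n : ℕ} {T A K : Matrix (Fin n) (Fin n) ℍ[ℝ]}
    (hT : ∀ r c, c < r → T r c = 0) (hd : ∀ i, T i i ≠ 0)
    (hK : ∀ r c, c < r → K r c = 0) (h : T * A = K) :
    ∀ r c, c < r → A r c = 0 := by
  intro r
  induction r using WellFoundedGT.induction with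
  | ind r ih =>
    intro c hc
    have h1 : (T * A) r c = 0 := by rw [h, hK r c hc]
    rw [Matrix.mul_apply, Finset.sum_eq_single r] at h1
    · exact (mul_eq_zero.1 h1).resolve_left (hd r)
    · intro k _ hk
      rcases lt_or_gt_of_ne hk with hk | hk
      · rw [hT r k hk, zero_mul]
      · rw [ih k hk c (hc.trans hk), mul_zero]
    · simp

lemma upperTriangular_mul_apply_self {n : ℕ} {X Y : Matrix (Fin n) (Fin n) ℍ[ℝ]}
    (hX : ∀ r c, c < r → X r c = 0) (hY : ∀ r c, c < r → Y r c = 0) (i : Fin n) :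
    (X * Y) i i = X i i * Y i i := by
  rw [Matrix.mul_apply, Finset.sum_eq_single i]
  · intro k _ hk
    rcases lt_or_gt_of_ne hk with hk | hk
    · rw [hX i k hk, zero_mul]
    · rw [hY k i hk, mul_zero]
  · simp

lemma upperTriangular_mul {n : ℕ} {X Y : Matrix (Fin n) (Fin n) ℍ[ℝ]}
    (hX : ∀ r c, c < r → X r c = 0) (hY : ∀ r c, c < r → Y r c = 0) :
    ∀ r c, c < r → (X * Y) r c = 0 := by
  intro r c hc
  rw [Matrix.mul_apply]
  refine Finset.sum_eq_zero fun k _ => ?_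
  rcases lt_or_ge k r with hk | hk
  · rw [hX r k hk, zero_mul]
  · rw [hY k c (hc.trans_le hk), mul_zero]

lemma upperTriangular_mul_apply_covBy {n : ℕ} {X Y : Matrix (Fin n) (Fin n) ℍ[ℝ]}
    (hX : ∀ r c, c < r → X r c = 0) (hY : ∀ r c, c < r → Y r c = 0) {i j : Fin n}
    (hij : i ⋖ j) : (X * Y) i j = X i i * Y i j + X i j * Y j j := by
  rw [Matrix.mul_apply, Finset.sum_eq_add_of_mem i j (Finset.mem_univ _) (Finset.mem_univ _)
    hij.lt.ne]
  rintro k _ ⟨hki, hkj⟩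
  rcases lt_or_gt_of_ne hki with hk | hk
  · rw [hX i k hk, zero_mul]
  · rw [hY k j (lt_of_le_of_ne (not_lt.1 fun h => hij.2 hk h) (Ne.symm hkj)), mul_zero]

lemma re_cq_mul_jq (z : ℂ) : (cq z * jq).re = 0 := by
  rw [Quaternion.re_mul]
  change z.re * 0 - z.im * 0 - 0 * 1 - 0 * 0 = (0 : ℝ)
  ring

lemma quaternion_re_mul_comm (p q : ℍ[ℝ]) : (p * q).re = (q * p).re := by
  rw [Quaternion.re_mul, Quaternion.re_mul]
  ring

/-- The sort key on the index set of `jordanC m mu`: eigenvalues in `⪰`-decreasing order first,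
then the position inside a block. -/
def jordanKey {k : ℕ} (m : Fin k → ℕ) (mu : Fin k → ℂ) (x : Σ t : Fin k, Fin (m t)) :
    ℝ ×ₗ ℝ ×ₗ ℕ :=
  toLex (-(mu x.1).im, toLex (-(mu x.1).re, (x.2 : ℕ)))

lemma jordanKey_injective {k : ℕ} {m : Fin k → ℕ} {mu : Fin k → ℂ}
    (hmu : Function.Injective mu) : Function.Injective (jordanKey m mu) := by
  rintro ⟨t, i⟩ ⟨t', i'⟩ h
  simp only [jordanKey, EmbeddingLike.apply_eq_iff_eq, Prod.mk.injEq, neg_inj] at h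
  obtain rfl : t = t' := hmu (Complex.ext h.2.1 h.1)
  simpa [Fin.ext_iff] using h.2.2

/-- A finite type can be enumerated in increasing order of an injective key. -/
lemma exists_equiv_strictMono_comp {n : ℕ} {α κ : Type*} [Fintype α] [LinearOrder κ] {g : α → κ}
    (hg : Function.Injective g) (e : Fin n ≃ α) : ∃ f : Fin n ≃ α, StrictMono (g ∘ f) := by
  let : LinearOrder α := LinearOrder.lift' g hg
  have hcard : Fintype.card α = n := by simpa using (Fintype.card_congr e).symm
  let f := Fintype.orderIsoFinOfCardEq α hcard
  refine ⟨f.toEquiv, fun i j hij => ?_⟩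
  have h : f i < f j := f.lt_iff_lt.2 hij
  exact h

/-- **Theorem 4.1(a).** Every nonderogatory quaternion matrix is unitarily similar to an
upper triangular matrix of the form (2.1). -/
theorem nonderogatory_triangular_form {n : ℕ} (M : Matrix (Fin n) (Fin n) ℍ[ℝ])
    (hM : Nonderogatory M) :
    ∃ (U : Matrix (Fin n) (Fin n) ℍ[ℝ]) (lam : Fin n → ℂ),
      IsUnitaryM U ∧ TriCanonForm (Uᴴ * M * U) lam := by
  obtain ⟨k, m, mu, e, -, hmu, him, S, hS⟩ := hM
  obtain ⟨f, hf⟩ := exists_equiv_strictMono_comp (jordanKey_injective (m := m) hmu) e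
  have hlt : ∀ x y, jordanKey m mu (f x) < jordanKey m mu (f y) ↔ x < y :=
    fun x y => hf.lt_iff_lt
  set J := (jordanC m mu).submatrix f f with hJ
  set σ : Fin n ≃ Fin n := f.trans e.symm with hσ
  set B : Matrix (Fin n) (Fin n) ℍ[ℝ] := (S⁻¹).val.submatrix id σ with hBdef
  set C : Matrix (Fin n) (Fin n) ℍ[ℝ] := S.val.submatrix σ id with hCdef
  have hCB : C * B = 1 := by
    rw [hCdef, hBdef, ← Matrix.submatrix_mul _ _ _ id _ Function.bijective_id, Units.mul_inv,
      Matrix.submatrix_one_equiv]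
  have hMBC : M = B * J * C := by
    have : J = ((jordanC m mu).submatrix e e).submatrix σ σ := by
      ext1 i j; simp [hJ, hσ]
    rw [hS, this, hCdef, hBdef, Matrix.submatrix_mul_equiv, Matrix.submatrix_mul_equiv,
      Matrix.submatrix_id_id]
  have hJup : ∀ r c, c < r → J r c = 0 := by
    intro r c hrc
    have h := (hlt c r).2 hrc
    simp only [hJ, Matrix.submatrix_apply, jordanC]
    split_ifs with h1 h2 h3
    · simp [jordanKey, h1, h2] at h
    · simp [jordanKey, h1, Prod.Lex.toLex_lt_toLex] at h
      omega
    · rfl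
    · rfl
  have hJdiag : ∀ i, J i i = cq (mu (f i).1) := by
    intro i; simp [hJ, jordanC]
  obtain ⟨T, hTup, hTdiag, hTorth⟩ := exists_upperTriangular_orthonormalize B (by
    intro c hc
    rw [← Matrix.one_mulVec c, ← hCB, ← Matrix.mulVec_mulVec, hc, Matrix.mulVec_zero])
  have hUU : (B * T) * (B * T)ᴴ = 1 := mul_eq_one_comm.1 hTorth
  have hT0 : ∀ i, T i i ≠ 0 := by
    intro i
    obtain ⟨t, ht, h⟩ := hTdiag i
    rw [h]
    exact fun h0 => ht.ne' (Quaternion.coe_injective h0)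
  set A := (B * T)ᴴ * M * (B * T) with hA
  have hTA : T * A = J * T := by
    calc T * A = (C * B) * T * A := by rw [hCB, one_mul]
      _ = C * ((B * T) * (B * T)ᴴ) * B * J * (C * B) * T := by
        rw [hA, hMBC]; simp only [Matrix.mul_assoc]
      _ = J * T := by rw [hUU, hCB, mul_one, mul_one, hCB, one_mul]
  have hAup := upperTriangular_of_mul_eq hTup hT0 (upperTriangular_mul hJup hTup) hTA
  have hAdiag : ∀ i, A i i = cq (mu (f i).1) := by
    intro i
    obtain ⟨t, ht, h⟩ := hTdiag i
    have h1 := congrFun (congrFun hTA i) i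
    rw [upperTriangular_mul_apply_self hTup hAup, upperTriangular_mul_apply_self hJup hTup,
      hJdiag, h, ← Quaternion.coe_commutes, ← h] at h1
    exact mul_left_cancel₀ (hT0 i) h1
  refine ⟨B * T, fun i => mu (f i).1, hTorth, hAup, hAdiag, fun i => him _, ?_, ?_⟩
  · intro l h
    have hl := (hlt ⟨l, Nat.lt_of_succ_lt h⟩ ⟨l + 1, h⟩).2 (Fin.mk_lt_mk.2 l.lt_succ_self)
    simp only [jordanKey, Prod.Lex.toLex_lt_toLex, neg_lt_neg_iff, neg_inj] at hl
    unfold csucceq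
    rcases hl with hl | ⟨h1, hl | ⟨h2, -⟩⟩
    · exact Or.inr hl
    · exact Or.inl ⟨hl.le, h1⟩
    · exact Or.inl ⟨h2.ge, h1⟩
  · rintro l h heq ⟨z, hz⟩
    set i : Fin n := ⟨l, Nat.lt_of_succ_lt h⟩ with hi
    set j : Fin n := ⟨l + 1, h⟩ with hj
    have hij : i ⋖ j := by
      refine ⟨Fin.mk_lt_mk.2 l.lt_succ_self, fun c h1 h2 => ?_⟩
      simp only [hi, hj, Fin.lt_def] at h1 h2
      omega
    have hJij : J i j = 1 := by
      have ht : (f i).1 = (f j).1 := hmu heq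
      have hl := (hlt i j).2 hij.lt
      simp [jordanKey, ht, Prod.Lex.toLex_lt_toLex] at hl
      have hle : ((f i).2 : ℕ) + 1 = (f j).2 := by
        by_contra hne
        have hlt' : ((f i).2 : ℕ) + 1 < (f j).2 := by omega
        set x : Σ t : Fin k, Fin (m t) := ⟨(f j).1, ⟨(f i).2 + 1, hlt'.trans (f j).2.2⟩⟩
        have h1 : jordanKey m mu (f i) < jordanKey m mu x := by
          simp [jordanKey, ht, x, Prod.Lex.toLex_lt_toLex]
        have h2 : jordanKey m mu x < jordanKey m mu (f j) := by
          simpa [jordanKey, x, Prod.Lex.toLex_lt_toLex] using hlt'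
        rw [← f.apply_symm_apply x, hlt] at h1 h2
        exact hij.2 h1 h2
      simp [hJ, jordanC, ht, ← hle]
    change A i j = _ at hz
    obtain ⟨t, -, htt⟩ := hTdiag i
    obtain ⟨s, hs, hss⟩ := hTdiag j
    have h1 := congrFun (congrFun hTA i) j
    rw [upperTriangular_mul_apply_covBy hTup hAup hij,
      upperTriangular_mul_apply_covBy hJup hTup hij, hAdiag j, hJdiag i, hJij, hz, htt, hss,
      show mu (f i).1 = mu (f j).1 from heq, one_mul] at h1
    have h2 := congrArg QuaternionAlgebra.re h1
    rw [Quaternion.re_add, Quaternion.re_add, quaternion_re_mul_comm (T i j),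
      Quaternion.coe_mul_eq_smul, Quaternion.re_smul, re_cq_mul_jq, Quaternion.re_coe,
      smul_zero] at h2
    linarith
end
end

section
/- Every n×n quaternion matrix A is unitarily similar to an upper triangular quaternion matrix whose diagonal entries are complex numbers with nonnegative imaginary parts, arranged in ⪰-decreasing order down the diagonal (Schur's theorem for quaternion matrices). -/
open Matrix
open scoped Quaternion

noncomputable section

@[simp] theorem re_cq (z : ℂ) : (cq z).re = z.re := rfl

@[simp] theorem imI_cq (z : ℂ) : (cq z).imI = z.im := rfl

@[simp] theorem imJ_cq (z : ℂ) : (cq z).imJ = 0 := rfl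

@[simp] theorem imK_cq (z : ℂ) : (cq z).imK = 0 := rfl

/-- The embedding of `ℂ` into the opposite quaternions, through which `ℂ` acts on quaternion
vectors from the right. -/
def complexToOp : ℂ →+* ℍ[ℝ]ᵐᵒᵖ :=
  RingHom.toOpposite (Quaternion.ofComplex : ℂ →+* ℍ[ℝ])
    fun z w => by rw [Commute, SemiconjBy, ← map_mul, mul_comm, map_mul]

/-- The complex structure on quaternion vectors given by right multiplication. -/
abbrev rightComplexModule (n : ℕ) : Module ℂ (Fin n → ℍ[ℝ]) :=
  Module.compHom _ complexToOp

theorem finite_rightComplexModule (n : ℕ) :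
    @Module.Finite ℂ (Fin n → ℍ[ℝ]) _ _ (rightComplexModule n) := by
  let _ := rightComplexModule n
  have : IsScalarTower ℝ ℂ (Fin n → ℍ[ℝ]) := ⟨fun r z v => by
    change complexToOp (r • z) • v = r • complexToOp z • v
    ext1 i
    change v i * cq (r • z) = r • (v i * cq z)
    ext <;> simp <;> ring⟩
  exact Module.Finite.of_restrictScalars_finite ℝ ℂ _

/-- Multiplication by a quaternion matrix as a map that is linear for the right action of `ℂ`. -/
def mulVecRightComplex {n : ℕ} (A : Matrix (Fin n) (Fin n) ℍ[ℝ]) :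
    @Module.End ℂ (Fin n → ℍ[ℝ]) _ _ (rightComplexModule n) :=
  letI := rightComplexModule n
  { toFun := fun v => A *ᵥ v
    map_add' := mulVec_add A
    map_smul' := fun z v => mulVec_smul A (complexToOp z) v }

/-- `z` is a complex right eigenvalue of `A`. -/
def IsRightEigenvalue {n : ℕ} (A : Matrix (Fin n) (Fin n) ℍ[ℝ]) (z : ℂ) : Prop :=
  ∃ v : Fin n → ℍ[ℝ], v ≠ 0 ∧ A *ᵥ v = MulOpposite.op (cq z) • v

theorem isRightEigenvalue_iff {n : ℕ} (A : Matrix (Fin n) (Fin n) ℍ[ℝ]) (z : ℂ) :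
    IsRightEigenvalue A z ↔
      @Module.End.HasEigenvalue ℂ _ _ _ (rightComplexModule n) (mulVecRightComplex A) z := by
  let _ := rightComplexModule n
  constructor
  · rintro ⟨v, hv, h⟩
    exact Module.End.hasEigenvalue_of_hasEigenvector (x := v)
      ⟨Module.End.mem_eigenspace_iff.2 h, hv⟩
  · intro h
    obtain ⟨v, hv, h0⟩ := h.exists_hasEigenvector
    exact ⟨v, h0, Module.End.mem_eigenspace_iff.1 hv⟩

theorem finite_setOf_isRightEigenvalue {n : ℕ} (A : Matrix (Fin n) (Fin n) ℍ[ℝ]) :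
    {z | IsRightEigenvalue A z}.Finite := by
  let _ := rightComplexModule n
  have := finite_rightComplexModule n
  simp_rw [isRightEigenvalue_iff]
  exact Module.End.finite_hasEigenvalue (mulVecRightComplex A)

theorem exists_isRightEigenvalue {n : ℕ} (A : Matrix (Fin (n + 1)) (Fin (n + 1)) ℍ[ℝ]) :
    ∃ z, IsRightEigenvalue A z := by
  let _ := rightComplexModule (n + 1)
  have := finite_rightComplexModule (n + 1)
  simp_rw [isRightEigenvalue_iff]
  exact Module.End.exists_eigenvalue (mulVecRightComplex A)

theorem IsRightEigenvalue.conj {n : ℕ} {A : Matrix (Fin n) (Fin n) ℍ[ℝ]} {z : ℂ}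
    (h : IsRightEigenvalue A z) : IsRightEigenvalue A (starRingEnd ℂ z) := by
  obtain ⟨v, hv, h⟩ := h
  obtain ⟨j, hr, hI, hJ, hK⟩ : ∃ j : ℍ[ℝ], j.re = 0 ∧ j.imI = 0 ∧ j.imJ = 1 ∧ j.imK = 0 :=
    ⟨⟨0, 0, 1, 0⟩, rfl, rfl, rfl, rfl⟩
  have hj : j ≠ 0 := fun h0 => by simp [h0] at hJ
  refine ⟨MulOpposite.op j • v, fun h0 => hv ?_, ?_⟩
  · ext1 i
    exact (mul_eq_zero.1 (congrFun h0 i : v i * j = 0)).resolve_right hj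
  rw [mulVec_smul, h, smul_smul, smul_smul, ← MulOpposite.op_mul, ← MulOpposite.op_mul]
  congr 2
  ext <;> simp [hr, hI, hJ, hK]

/-- There is a `⪰`-largest right eigenvalue with nonnegative imaginary part. -/
theorem exists_max_isRightEigenvalue {n : ℕ} (A : Matrix (Fin (n + 1)) (Fin (n + 1)) ℍ[ℝ]) :
    ∃ z : ℂ, IsRightEigenvalue A z ∧ 0 ≤ z.im ∧
      ∀ w : ℂ, IsRightEigenvalue A w → 0 ≤ w.im → csucceq z w := by
  have hne : {z : ℂ | IsRightEigenvalue A z ∧ 0 ≤ z.im}.Nonempty := by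
    obtain ⟨z, hz⟩ := exists_isRightEigenvalue A
    rcases le_total 0 z.im with h | h
    · exact ⟨z, hz, h⟩
    · exact ⟨_, hz.conj, by simpa using h⟩
  obtain ⟨z, hz, hmax⟩ := Set.Finite.exists_maximalFor (fun z : ℂ => toLex (z.im, z.re)) _
    ((finite_setOf_isRightEigenvalue A).subset fun z hz => hz.1) hne
  refine ⟨z, hz.1, hz.2, fun w hw hw0 => ?_⟩
  have hle : toLex (w.im, w.re) ≤ toLex (z.im, z.re) :=
    (le_total _ _).elim id fun h => hmax ⟨hw, hw0⟩ h
  rcases Prod.Lex.toLex_le_toLex.1 hle with h | ⟨h, h'⟩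
  · exact Or.inr h
  · exact Or.inl ⟨h', h.symm⟩

/-- The block diagonal matrix with diagonal blocks `q` and `V`. -/
def consDiag {n : ℕ} (q : ℍ[ℝ]) (V : Matrix (Fin n) (Fin n) ℍ[ℝ]) :
    Matrix (Fin (n + 1)) (Fin (n + 1)) ℍ[ℝ] :=
  Matrix.of (Fin.cons (Fin.cons q 0) fun i => Fin.cons 0 (V i))

section consDiag

variable {n : ℕ} (q : ℍ[ℝ]) (V : Matrix (Fin n) (Fin n) ℍ[ℝ])

@[simp] theorem consDiag_zero_zero : consDiag q V 0 0 = q := rfl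

@[simp] theorem consDiag_zero_succ (j : Fin n) : consDiag q V 0 j.succ = 0 := rfl

@[simp] theorem consDiag_succ_zero (i : Fin n) : consDiag q V i.succ 0 = 0 := rfl

@[simp] theorem consDiag_succ_succ (i j : Fin n) : consDiag q V i.succ j.succ = V i j := rfl

end consDiag

theorem isUnitaryM_consDiag {n : ℕ} {q : ℍ[ℝ]} {V : Matrix (Fin n) (Fin n) ℍ[ℝ]}
    (hq : star q * q = 1) (hV : IsUnitaryM V) : IsUnitaryM (consDiag q V) := by
  unfold IsUnitaryM at *
  ext1 i j
  rw [mul_apply, Fin.sum_univ_succ]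
  refine Fin.cases ?_ (fun i => ?_) i <;> refine Fin.cases ?_ (fun j => ?_) j
  · simp [hq]
  · simp [one_apply, (Fin.succ_ne_zero j).symm]
  · simp [one_apply]
  · simpa [mul_apply, one_apply] using congrFun₂ hV i j

theorem IsUnitaryM.mul {n : ℕ} {U V : Matrix (Fin n) (Fin n) ℍ[ℝ]}
    (hU : IsUnitaryM U) (hV : IsUnitaryM V) : IsUnitaryM (U * V) := by
  unfold IsUnitaryM at *
  rw [conjTranspose_mul, Matrix.mul_assoc, ← Matrix.mul_assoc Uᴴ, hU, Matrix.one_mul, hV]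

instance : StarModule ℝ ℍ[ℝ] := ⟨fun s a => by ext <;> simp⟩

/-- The squared Euclidean norm of a quaternion vector is real. -/
theorem star_dotProduct_self {n : ℕ} (v : Fin n → ℍ[ℝ]) :
    star v ⬝ᵥ v = ((∑ i, Quaternion.normSq (v i) : ℝ) : ℍ[ℝ]) := by
  simp only [dotProduct, Pi.star_apply, Quaternion.star_mul_self]
  exact (map_sum (algebraMap ℝ ℍ[ℝ]) _ _).symm

/-- Every quaternion is a unit quaternion times a nonnegative real. -/
theorem exists_polar (a : ℍ[ℝ]) :
    ∃ q : ℍ[ℝ], star q * q = 1 ∧ ∃ r : ℝ, 0 ≤ r ∧ a = q * (r : ℍ[ℝ]) := by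
  by_cases ha : a = 0
  · exact ⟨1, by simp, 0, le_rfl, by simp [ha]⟩
  · have h : ‖a‖ ≠ 0 := norm_ne_zero_iff.2 ha
    refine ⟨a * ((‖a‖⁻¹ : ℝ) : ℍ[ℝ]), ?_, ‖a‖, norm_nonneg a, ?_⟩
    · rw [Quaternion.star_mul_self, map_mul, Quaternion.normSq_eq_norm_mul_self,
        Quaternion.normSq_coe, ← Quaternion.coe_one]
      congr 1
      field_simp
    · rw [mul_assoc, ← Quaternion.coe_mul, inv_mul_cancel₀ h, Quaternion.coe_one, mul_one]

/-- The Householder reflection along `w`. -/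
theorem isUnitaryM_householder {n : ℕ} (w : Fin n → ℍ[ℝ]) (s : ℝ) (hs : s ≠ 0)
    (hw : star w ⬝ᵥ w = (s : ℍ[ℝ])) :
    IsUnitaryM (1 - (2 / s) • vecMulVec w (star w)) := by
  have hH : (1 - (2 / s) • vecMulVec w (star w))ᴴ = 1 - (2 / s) • vecMulVec w (star w) := by
    simp [conjTranspose_smul, conjTranspose_vecMulVec]
  have hP : vecMulVec w (star w) * vecMulVec w (star w) = s • vecMulVec w (star w) := by
    rw [vecMulVec_mul_vecMulVec, hw]
    ext1 i j
    simp only [vecMulVec_apply, Pi.smul_apply, smul_eq_mul, Matrix.smul_apply]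
    rw [Quaternion.coe_mul_eq_smul, mul_smul_comm]
  rw [IsUnitaryM, hH, sub_mul, Matrix.one_mul, mul_sub, Matrix.mul_one, smul_mul_smul_comm, hP, smul_smul,
    ← sub_eq_zero]
  have : 2 / s * (2 / s) * s = 2 / s + 2 / s := by field_simp; ring
  rw [this, add_smul]
  abel

/-- Every unit vector is the first column of a unitary matrix. -/
theorem exists_isUnitaryM_col {n : ℕ} (v : Fin (n + 1) → ℍ[ℝ]) (hv : star v ⬝ᵥ v = 1) :
    ∃ U : Matrix (Fin (n + 1)) (Fin (n + 1)) ℍ[ℝ], IsUnitaryM U ∧ ∀ i, U i 0 = v i := by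
  obtain ⟨q, hq, r, hr, h0⟩ := exists_polar (v 0)
  let e : Fin (n + 1) → ℍ[ℝ] := Pi.single 0 q
  have hev : star e ⬝ᵥ v = (r : ℍ[ℝ]) := by
    simp [e, h0, ← mul_assoc, hq]
  have hve : star v ⬝ᵥ e = (r : ℍ[ℝ]) := by
    rw [star_dotProduct, hev]
    simp
  have hee : star e ⬝ᵥ e = 1 := by
    simp [e, hq]
  have hs : 2 + 2 * r ≠ 0 := by positivity
  have hw : star (v + e) ⬝ᵥ (v + e) = ((2 + 2 * r : ℝ) : ℍ[ℝ]) := by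
    rw [star_add, add_dotProduct, dotProduct_add, dotProduct_add, hv, hve, hev, hee]
    rw [← Quaternion.coe_one]
    norm_cast
    ring_nf
  refine ⟨(1 - (2 / (2 + 2 * r)) • vecMulVec (v + e) (star (v + e))) * consDiag (-q) 1,
    (isUnitaryM_householder _ _ hs hw).mul (isUnitaryM_consDiag (by simpa using hq)
      (by simp [IsUnitaryM])), fun i => ?_⟩
  have hwe : star (v + e) ⬝ᵥ e = ((1 + r : ℝ) : ℍ[ℝ]) := by
    rw [star_add, add_dotProduct, hve, hee]
    push_cast
    exact add_comm _ _
  have hcol : (consDiag (-q) (1 : Matrix (Fin n) (Fin n) ℍ[ℝ])).col 0 = -e := by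
    ext1 i
    refine Fin.cases ?_ (fun i => ?_) i <;> simp [e, col]
  have hUcol : ((1 - (2 / (2 + 2 * r)) • vecMulVec (v + e) (star (v + e))) *
      consDiag (-q) 1).col 0 = v := by
    have hc : 2 / (2 + 2 * r) * (1 + r) = 1 := by field_simp
    rw [← mulVec_single_one, ← mulVec_mulVec, mulVec_single_one, hcol, mulVec_neg, sub_mulVec,
      one_mulVec, smul_mulVec, vecMulVec_mulVec, hwe]
    have : MulOpposite.op ((1 + r : ℝ) : ℍ[ℝ]) • (v + e) = (1 + r) • (v + e) := by
      ext1 i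
      exact Quaternion.mul_coe_eq_smul _ _
    rw [this, smul_smul, hc, one_smul]
    abel
  exact congrFun hUcol i

theorem exists_sylvester {z w : ℂ} (hz : 0 ≤ z.im) (hw : 0 ≤ w.im) (hzw : z ≠ w) (b : ℍ[ℝ]) :
    ∃ a : ℍ[ℝ], cq z * a + b = a * cq w := by
  have h1 : z - w ≠ 0 := sub_ne_zero.2 hzw
  have h2 : z - starRingEnd ℂ w ≠ 0 := by
    refine sub_ne_zero.2 fun h => hzw ?_
    have hre := congrArg Complex.re h
    have him := congrArg Complex.im h
    simp only [Complex.conj_re, Complex.conj_im] at hre him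
    exact Complex.ext hre (by linarith)
  obtain ⟨a₁, ha₁⟩ : ∃ a : ℂ, z * a + ⟨b.re, b.imI⟩ = a * w :=
    ⟨-⟨b.re, b.imI⟩ / (z - w), by field_simp; ring⟩
  obtain ⟨a₂, ha₂⟩ : ∃ a : ℂ, z * a + ⟨b.imJ, b.imK⟩ = a * starRingEnd ℂ w :=
    ⟨-⟨b.imJ, b.imK⟩ / (z - starRingEnd ℂ w), by field_simp; ring⟩
  obtain ⟨a, hr, hI, hJ, hK⟩ :
      ∃ a : ℍ[ℝ], a.re = a₁.re ∧ a.imI = a₁.im ∧ a.imJ = a₂.re ∧ a.imK = a₂.im :=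
    ⟨⟨a₁.re, a₁.im, a₂.re, a₂.im⟩, rfl, rfl, rfl, rfl⟩
  refine ⟨a, ?_⟩
  rw [Complex.ext_iff] at ha₁ ha₂
  simp only [Complex.add_re, Complex.add_im, Complex.mul_re, Complex.mul_im, Complex.conj_re,
    Complex.conj_im] at ha₁ ha₂
  ext <;> simp [hr, hI, hJ, hK] <;> linarith

/-- If `M` has first column `(z, 0)`, a right eigenvalue of the complementary diagonal block is
a right eigenvalue of `M`, at least if both eigenvalues have nonnegative imaginary part. -/
theorem IsRightEigenvalue.of_block {n : ℕ} {M : Matrix (Fin (n + 1)) (Fin (n + 1)) ℍ[ℝ]}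
    {z w : ℂ} (hz0 : 0 ≤ z.im) (hw0 : 0 ≤ w.im) (hz : M 0 0 = cq z)
    (hM : ∀ i : Fin n, M i.succ 0 = 0)
    (hw : IsRightEigenvalue (M.submatrix Fin.succ Fin.succ) w) : IsRightEigenvalue M w := by
  by_cases hzw : z = w
  · refine ⟨Pi.single 0 1, by simp, ?_⟩
    ext1 i
    refine Fin.cases ?_ (fun i => ?_) i <;> simp [hz, hM, hzw]
  obtain ⟨x, hx, h⟩ := hw
  obtain ⟨a, ha⟩ := exists_sylvester hz0 hw0 hzw (∑ j : Fin n, M 0 j.succ * x j)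
  refine ⟨Fin.cons a x, fun h0 => hx ?_, ?_⟩
  · ext1 i
    exact congrFun h0 i.succ
  · ext1 i
    refine Fin.cases ?_ (fun i => ?_) i
    · simpa [mulVec, dotProduct, Fin.sum_univ_succ, hz] using ha
    · simpa [mulVec, dotProduct, Fin.sum_univ_succ, hM] using congrFun h i

theorem IsRightEigenvalue.of_conjTranspose_mul_mul {n : ℕ}
    {A U : Matrix (Fin n) (Fin n) ℍ[ℝ]} {z : ℂ} (hU : IsUnitaryM U)
    (h : IsRightEigenvalue (Uᴴ * A * U) z) : IsRightEigenvalue A z := by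
  obtain ⟨v, hv, h⟩ := h
  have hU' : U * Uᴴ = 1 := mul_eq_one_comm.1 hU
  refine ⟨U *ᵥ v, fun h0 => hv ?_, ?_⟩
  · rw [← one_mulVec v, ← hU, ← mulVec_mulVec, h0, mulVec_zero]
  · rw [← mulVec_smul, ← h, mulVec_mulVec, mulVec_mulVec, ← Matrix.mul_assoc,
      ← Matrix.mul_assoc, hU', Matrix.one_mul]

theorem IsRightEigenvalue.exists_unit {n : ℕ} {A : Matrix (Fin n) (Fin n) ℍ[ℝ]} {z : ℂ}
    (h : IsRightEigenvalue A z) :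
    ∃ v : Fin n → ℍ[ℝ], star v ⬝ᵥ v = 1 ∧ A *ᵥ v = MulOpposite.op (cq z) • v := by
  obtain ⟨v, hv, h⟩ := h
  have hpos : 0 < ∑ i, Quaternion.normSq (v i) := by
    obtain ⟨i, hi⟩ := Function.ne_iff.1 hv
    exact Finset.sum_pos' (fun i _ => Quaternion.normSq_nonneg)
      ⟨i, Finset.mem_univ i, lt_of_le_of_ne Quaternion.normSq_nonneg
        (Ne.symm (Quaternion.normSq_ne_zero.2 hi))⟩
  set s := ∑ i, Quaternion.normSq (v i) with hs
  refine ⟨(√s)⁻¹ • v, ?_, ?_⟩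
  · rw [star_smul, smul_dotProduct, dotProduct_smul, star_dotProduct_self, ← hs, smul_smul,
      ← Quaternion.coe_smul, ← Quaternion.coe_one]
    congr 1
    simp only [star_trivial, smul_eq_mul]
    rw [← mul_inv, Real.mul_self_sqrt hpos.le, inv_mul_cancel₀ hpos.ne']
  · rw [mulVec_smul, h, smul_comm]

/-- Unitary reduction of a matrix with right eigenvalue `z` to one with first column `(z, 0)`. -/
theorem IsRightEigenvalue.exists_deflation {n : ℕ}
    {A : Matrix (Fin (n + 1)) (Fin (n + 1)) ℍ[ℝ]} {z : ℂ} (h : IsRightEigenvalue A z) :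
    ∃ U : Matrix (Fin (n + 1)) (Fin (n + 1)) ℍ[ℝ], IsUnitaryM U ∧
      (Uᴴ * A * U) 0 0 = cq z ∧ ∀ i : Fin n, (Uᴴ * A * U) i.succ 0 = 0 := by
  obtain ⟨v, hv, h⟩ := h.exists_unit
  obtain ⟨U, hU, hcol⟩ := exists_isUnitaryM_col v hv
  have hUv : Uᴴ *ᵥ v = Pi.single 0 1 := by
    have : v = U *ᵥ Pi.single 0 1 := by ext1 i; simp [hcol]
    rw [this, mulVec_mulVec, hU, one_mulVec]
  have key : ∀ i, (Uᴴ * A * U) i 0 = (Pi.single 0 1 : Fin (n + 1) → ℍ[ℝ]) i * cq z := by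
    intro i
    have h1 : (Uᴴ * A * U) i 0 = ((Uᴴ * A) *ᵥ v) i := by
      simp [mul_apply (N := U), hcol, mulVec, dotProduct]
    rw [h1, ← mulVec_mulVec, h, mulVec_smul, hUv]
    rfl
  exact ⟨U, hU, by simp [key], fun i => by simp [key]⟩

section consDiagConj

variable {n : ℕ} (V : Matrix (Fin n) (Fin n) ℍ[ℝ])
  (M : Matrix (Fin (n + 1)) (Fin (n + 1)) ℍ[ℝ])

theorem consDiag_conj_zero_zero :
    ((consDiag 1 V)ᴴ * M * consDiag 1 V) 0 0 = M 0 0 := by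
  simp [mul_apply, Fin.sum_univ_succ]

theorem consDiag_conj_succ_zero (hM : ∀ i : Fin n, M i.succ 0 = 0) (i : Fin n) :
    ((consDiag 1 V)ᴴ * M * consDiag 1 V) i.succ 0 = 0 := by
  simp [mul_apply, Fin.sum_univ_succ, hM]

theorem consDiag_conj_succ_succ (i j : Fin n) :
    ((consDiag 1 V)ᴴ * M * consDiag 1 V) i.succ j.succ =
      (Vᴴ * M.submatrix Fin.succ Fin.succ * V) i j := by
  simp [mul_apply, Fin.sum_univ_succ]

end consDiagConj

/-- **Schur's theorem for quaternion matrices.** Every square quaternion matrix is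
unitarily similar to an upper triangular matrix whose diagonal entries are complex numbers
with nonnegative imaginary parts, arranged in `⪰`-decreasing order down the diagonal. -/
theorem quaternion_schur_triangularization {n : ℕ} (A : Matrix (Fin n) (Fin n) ℍ[ℝ]) :
    ∃ (U : Matrix (Fin n) (Fin n) ℍ[ℝ]) (lam : Fin n → ℂ),
      IsUnitaryM U ∧
      (∀ r c : Fin n, c < r → (Uᴴ * A * U) r c = 0) ∧
      (∀ l, (Uᴴ * A * U) l l = cq (lam l)) ∧
      (∀ l, 0 ≤ (lam l).im) ∧
      (∀ (l : ℕ) (h : l + 1 < n),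
        csucceq (lam ⟨l, Nat.lt_of_succ_lt h⟩) (lam ⟨l + 1, h⟩)) := by
  suffices H : ∃ (U : Matrix (Fin n) (Fin n) ℍ[ℝ]) (lam : Fin n → ℂ),
      IsUnitaryM U ∧
      (∀ r c : Fin n, c < r → (Uᴴ * A * U) r c = 0) ∧
      (∀ l, (Uᴴ * A * U) l l = cq (lam l)) ∧
      (∀ l, 0 ≤ (lam l).im) ∧
      (∀ (l : ℕ) (h : l + 1 < n),
        csucceq (lam ⟨l, Nat.lt_of_succ_lt h⟩) (lam ⟨l + 1, h⟩)) ∧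
      ∀ h : 0 < n, IsRightEigenvalue A (lam ⟨0, h⟩) by
    obtain ⟨U, lam, h1, h2, h3, h4, h5, -⟩ := H
    exact ⟨U, lam, h1, h2, h3, h4, h5⟩
  induction n with
  | zero => exact ⟨1, 0, by simp [IsUnitaryM], fun r => r.elim0, fun l => l.elim0,
      fun l => l.elim0, fun l h => by omega, fun h => by omega⟩
  | succ n ih =>
    obtain ⟨z, hz, hz0, hmax⟩ := exists_max_isRightEigenvalue A
    obtain ⟨U, hU, hU0, hUs⟩ := hz.exists_deflation
    obtain ⟨V, lam, hV, hVt, hVd, him, hord, hfst⟩ :=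
      ih ((Uᴴ * A * U).submatrix Fin.succ Fin.succ)
    have hassoc : (U * consDiag 1 V)ᴴ * A * (U * consDiag 1 V) =
        (consDiag 1 V)ᴴ * (Uᴴ * A * U) * consDiag 1 V := by
      simp only [conjTranspose_mul, Matrix.mul_assoc]
    refine ⟨U * consDiag 1 V, Fin.cons z lam, hU.mul (isUnitaryM_consDiag (by simp) hV),
      fun r c hrc => ?_, fun l => ?_, fun l => ?_, fun l h => ?_, fun _ => hz⟩
    · rw [hassoc]
      obtain ⟨r, rfl⟩ := Fin.exists_succ_eq.2 (Fin.ne_zero_of_lt hrc)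
      induction c using Fin.cases with
      | zero => exact consDiag_conj_succ_zero V _ hUs r
      | succ c =>
        rw [consDiag_conj_succ_succ]
        exact hVt r c (Fin.succ_lt_succ_iff.1 hrc)
    · rw [hassoc]
      induction l using Fin.cases with
      | zero => rw [consDiag_conj_zero_zero, hU0]; rfl
      | succ l => rw [consDiag_conj_succ_succ, hVd]; rfl
    · induction l using Fin.cases with
      | zero => exact hz0
      | succ l => exact him l
    · cases l with
      | zero =>
        have hn : 0 < n := by omega
        exact hmax _ (((hfst hn).of_block hz0 (him _) hU0 hUs).of_conjTranspose_mul_mul hU)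
          (him ⟨0, hn⟩)
      | succ l => exact hord l (by omega)
end
end
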